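/- Let S' = K[x_1,…,x_n], S = S'[x], and let I ⊆ S' be a squarefree monomial ideal all of whose squarefree powers are componentwise linear; set J = (I, x) ⊆ S. Then for every k with 2 ≤ k ≤ ν(I), the projective dimension satisfies pd(S/J^[k]) = max{ pd(S'/I^[k]) + 1, pd(S'/I^[k−1]) }, and equivalently depth(S/J^[k]) = min{ depth(S'/I^[k]), depth(S'/I^[k−1]) + 1 }. -/

import Mathlib

open MvPolynomial

/-- The squarefree monomial `∏ i ∈ F, xᵢ`. -/
noncomputable def sqMon (K : Type) [Field K] {σ : Type} (F : Finset σ) :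
    MvPolynomial σ K := ∏ i ∈ F, X i

/-- `I` is a squarefree monomial ideal if it is generated by squarefree monomials. -/
def IsSqfreeMonomialIdeal (K : Type) [Field K] {σ : Type}
    (I : Ideal (MvPolynomial σ K)) : Prop :=
  ∃ 𝒢 : Set (Finset σ), I = Ideal.span ((sqMon K) '' 𝒢)

/-- The `k`-th squarefree power `I^[k]`: the ideal generated by all squarefree
monomials belonging to `I^k`. -/
noncomputable def sqfreePower (K : Type) [Field K] {σ : Type}
    (I : Ideal (MvPolynomial σ K)) (k : ℕ) : Ideal (MvPolynomial σ K) :=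
  Ideal.span {m | ∃ F : Finset σ, m = sqMon K F ∧ m ∈ I ^ k}

/-- The monomial grade `ν(I)`: the largest `k` with `I^[k] ≠ (0)`. -/
noncomputable def monGrade (K : Type) [Field K] {σ : Type}
    (I : Ideal (MvPolynomial σ K)) : ℕ :=
  sSup {k | sqfreePower K I k ≠ ⊥}

/-- The initial degree of a squarefree monomial ideal: the least degree of a
(squarefree) monomial belonging to it. -/
noncomputable def indeg (K : Type) [Field K] {σ : Type}
    (I : Ideal (MvPolynomial σ K)) : ℕ :=
  sInf {d | ∃ F : Finset σ, F.card = d ∧ sqMon K F ∈ I}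

/-- The depth of `S/I` over the polynomial ring `S`: the longest length of a
regular sequence on `S/I` consisting of elements of the irrelevant maximal ideal. -/
noncomputable def polyDepth (K : Type) [Field K] {σ : Type}
    (I : Ideal (MvPolynomial σ K)) : ℕ :=
  sSup {k | ∃ rs : List (MvPolynomial σ K), rs.length = k ∧
    (∀ r ∈ rs, r ∈ Ideal.span (Set.range (X : σ → MvPolynomial σ K))) ∧
    RingTheory.Sequence.IsRegular (MvPolynomial σ K ⧸ I) rs}

/-- The normalized depth function `g_I(k) = depth(S/I^[k]) - (indeg(I^[k]) - 1)`. -/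
noncomputable def nDepth (K : Type) [Field K] {σ : Type}
    (I : Ideal (MvPolynomial σ K)) (k : ℕ) : ℤ :=
  (polyDepth K (sqfreePower K I k) : ℤ) - ((indeg K (sqfreePower K I k) : ℤ) - 1)

open MvPolynomial

/-- The basis indexing set of the `i`-th term of the Koszul complex on the variables:
`i`-element subsets of the variables. -/
abbrev koszulIdx (σ : Type) (i : ℕ) : Type := {T : Finset σ // T.card = i}

/-- The `i`-th term `Λ^i(S^σ) = ⊕_{|T| = i} S·e_T` of the Koszul complex of the
sequence of all variables of `S = K[xᵢ : i ∈ σ]`. -/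
def koszulModule (K : Type) [Field K] (σ : Type) (i : ℕ) : Type :=
  koszulIdx σ i →₀ MvPolynomial σ K

noncomputable instance (K : Type) [Field K] (σ : Type) (i : ℕ) :
    AddCommGroup (koszulModule K σ i) := Finsupp.instAddCommGroup

noncomputable instance (K : Type) [Field K] (σ : Type) (i : ℕ) :
    Module K (koszulModule K σ i) := Finsupp.module _ _

/-- The Koszul differential `e_T ⊗ p ↦ ∑ (-1)^r e_{T∖tᵣ} ⊗ xᵗʳ·p`. -/
noncomputable def koszulDsucc (K : Type) [Field K] (σ : Type) [LinearOrder σ] (i : ℕ) :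
    koszulModule K σ (i + 1) →ₗ[K] koszulModule K σ i :=
  Finsupp.lsum K (fun T => ∑ r : Fin (i + 1),
    ((-1 : K) ^ (r : ℕ)) •
      (((Finsupp.lsingle (⟨T.1.erase ((T.1.orderIsoOfFin T.2 r : T.1) : σ), by
            rw [Finset.card_erase_of_mem (T.1.orderIsoOfFin T.2 r).2, T.2]; omega⟩ :
              koszulIdx σ i)).comp
          (LinearMap.mulLeft K (X ((T.1.orderIsoOfFin T.2 r : T.1) : σ)))) :
            MvPolynomial σ K →ₗ[K] koszulModule K σ i))

/-- The full Koszul differential, with the zero map leaving homological degree `0`. -/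
noncomputable def koszulD (K : Type) [Field K] (σ : Type) [LinearOrder σ] :
    (i : ℕ) → koszulModule K σ i →ₗ[K] koszulModule K σ (i - 1)
  | 0 => 0
  | (i + 1) => koszulDsucc K σ i

/-- The degree-`j` strand of `(Koszul complex) ⊗ J` in homological degree `i`:
elements `∑ e_T ⊗ p_T` with every `p_T ∈ J` homogeneous of degree `j - i`
(and zero if `i > j`, as the generator `e_T` has internal degree `i`). -/
noncomputable def koszulStrand (K : Type) [Field K] {σ : Type}
    (J : Ideal (MvPolynomial σ K)) (i j : ℕ) : Submodule K (koszulModule K σ i) :=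
  ⨅ T : koszulIdx σ i,
    Submodule.comap
      ((Finsupp.lapply T) : koszulModule K σ i →ₗ[K] MvPolynomial σ K)
      ((Submodule.restrictScalars K J ⊓ homogeneousSubmodule σ K (j - i)) ⊓
        (if i ≤ j then ⊤ else ⊥))

/-- The graded Betti number `β_{i,j}(J) = dim_K Tor_i(J, K)_j`, computed as the
dimension of the degree-`j` strand of the `i`-th homology of the Koszul complex
tensored with `J`. -/
noncomputable def gradedBetti (K : Type) [Field K] {σ : Type} [LinearOrder σ]
    (J : Ideal (MvPolynomial σ K)) (i j : ℕ) : ℕ :=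
  Module.finrank K
    (↥(koszulStrand K J i j ⊓ LinearMap.ker (koszulD K σ i)) ⧸
      Submodule.comap (koszulStrand K J i j ⊓ LinearMap.ker (koszulD K σ i)).subtype
        (Submodule.map (koszulD K σ (i + 1)) (koszulStrand K J (i + 1) j)))

/-- An ideal generated in degree `d` has a `d`-linear resolution iff its graded Betti
numbers are concentrated on the line `j = d + i`. -/
def HasLinearResolution (K : Type) [Field K] {σ : Type} [LinearOrder σ]
    (J : Ideal (MvPolynomial σ K)) (d : ℕ) : Prop :=
  ∀ i j : ℕ, gradedBetti K J i j ≠ 0 → j = d + i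

/-- The ideal generated by the degree-`d` component of `J`. -/
noncomputable def degreeComponentIdeal (K : Type) [Field K] {σ : Type}
    (J : Ideal (MvPolynomial σ K)) (d : ℕ) : Ideal (MvPolynomial σ K) :=
  Ideal.span {f | f ∈ J ∧ f.IsHomogeneous d}

/-- `J` is componentwise linear if for every degree `d` the ideal generated by the
degree-`d` component of `J` has a `d`-linear resolution. -/
def ComponentwiseLinear (K : Type) [Field K] {σ : Type} [LinearOrder σ]
    (J : Ideal (MvPolynomial σ K)) : Prop :=
  ∀ d : ℕ, HasLinearResolution K (degreeComponentIdeal K J d) d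

open CategoryTheory

/-- The projective dimension of a module `M` over a commutative ring `S`: the least `d`
such that `Ext^{d+1}(M, -)` vanishes. -/
noncomputable def projDim (S : Type) [CommRing S] (M : Type) [AddCommGroup M] [Module S M] : ℕ :=
  sInf {d : ℕ | ∀ N : ModuleCat S,
    Subsingleton (((Ext S (ModuleCat S) (d + 1)).obj (Opposite.op (ModuleCat.of S M))).obj N)}

/-!
Put `A = I^[k]` and `B = I^[k-1]`, so that `J^[k] = A + xB`. The partial derivative along a variable
`v` maps `I ^ k` into `I ^ (k-1)`, hence `(A : v) ⊆ B`; this is the only input from powers.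

A depth or projective dimension bound for `S/U` is studied through the colon sequence
`0 → S/(U : v) → S/U → S/(U, v) → 0`. The monomials of `U` prime to `v` generate an ideal `U₀` with
`(U₀, v) = (U, v)` and `(U₀ : v) = U₀`, so by naturality the extension class factors through `S/V`
for every `V` between `U₀` and `(U : v)`. With `V = U` this passes the bound from `U` to `(U : v)`;
with a larger `V` satisfying the bound shifted by one, it passes the bound from `U` to `(U, v)`.

Apply this to `U = A + xB`: here `(U : x) = B` and `(U, x) = (A, x)`. Only the shifted bound for `A`
needs an argument, by Noetherian induction on `A`: some variable `v` enlarges `A`, induction applied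
to `(U : v) = (A : v) + x(B : v)` gives the shifted bound for `(A : v)`, and since
`A ⊆ (A : v) ⊆ B`, the choice `V = (A : v)` gives the bound for `(A, x)`.
-/

section ConnectingClass

open Abelian

variable {C : Type*} [Category* C] [Abelian C] [HasExt C]

lemma subsingleton_ext_of_iso {X X' Y Y' : C} (f : X ≅ X') (g : Y ≅ Y') {i : ℕ}
    (h : Subsingleton (Ext X Y i)) : Subsingleton (Ext X' Y' i) := by
  have conj (e : Ext X' Y' i) : e = ((Ext.mk₀ f.inv).comp (((Ext.mk₀ f.hom).comp e
      (zero_add i)).comp (Ext.mk₀ g.inv) (add_zero i)) (zero_add i)).comp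
        (Ext.mk₀ g.hom) (add_zero i) := by
    simp
  exact ⟨fun a b => by rw [conj a, conj b, h.elim (((Ext.mk₀ f.hom).comp a _).comp _ _)]⟩

/-- `grade(N, M) ≥ k` in the sense of Rees: the groups `Extⁱ(N, M)` vanish for all `i < k`. -/
def GradeGE (N M : C) (k : ℕ) : Prop :=
  ∀ i < k, Subsingleton (Ext N M i)

lemma gradeGE_iff {N M : C} {k : ℕ} : GradeGE N M k ↔ ∀ i < k, ∀ e : Ext N M i, e = 0 :=
  ⟨fun h i hi e => (h i hi).elim e 0, fun h i hi => ⟨fun a b => (h i hi a).trans (h i hi b).symm⟩⟩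

lemma GradeGE.mono {N M : C} {k l : ℕ} (h : GradeGE N M l) (hkl : k ≤ l) : GradeGE N M k :=
  fun i hi => h i (hi.trans_le hkl)

variable {S : ShortComplex C}

lemma GradeGE.X₂ (hS : S.ShortExact) {N : C} {k : ℕ} (h₁ : GradeGE N S.X₁ k)
    (h₃ : GradeGE N S.X₃ k) : GradeGE N S.X₂ k := by
  refine gradeGE_iff.2 fun i hi e => ?_
  obtain ⟨x, rfl⟩ := Ext.covariant_sequence_exact₂ N hS e (gradeGE_iff.1 h₃ i hi _)
  rw [gradeGE_iff.1 h₁ i hi x, Ext.zero_comp]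

lemma GradeGE.X₃ (hS : S.ShortExact) {N : C} {k : ℕ} (h₁ : GradeGE N S.X₁ (k + 1))
    (h₂ : GradeGE N S.X₂ k) : GradeGE N S.X₃ k := by
  refine gradeGE_iff.2 fun i hi e => ?_
  obtain ⟨x, rfl⟩ := Ext.covariant_sequence_exact₃ N hS e rfl
    (gradeGE_iff.1 h₁ (i + 1) (by omega) _)
  rw [gradeGE_iff.1 h₂ i hi x, Ext.zero_comp]

lemma GradeGE.X₁_of_comp_eq_zero (hS : S.ShortExact) {N : C} {k : ℕ}
    (hf : ∀ (i : ℕ) (e : Ext N S.X₁ i), e.comp (Ext.mk₀ S.f) (add_zero i) = 0)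
    (h₃ : GradeGE N S.X₃ k) : GradeGE N S.X₁ (k + 1) := by
  refine gradeGE_iff.2 fun i hi e => ?_
  cases i with
  | zero =>
    have := hS.mono_f
    exact Ext.postcomp_mk₀_injective_of_mono N S.f ((hf 0 e).trans (map_zero _).symm)
  | succ i =>
    obtain ⟨x, rfl⟩ := Ext.covariant_sequence_exact₁ N hS e (hf _ e) rfl
    rw [gradeGE_iff.1 h₃ i (by omega) x, Ext.zero_comp]

lemma subsingleton_ext_X₁_of_comp_eq_zero (hS : S.ShortExact) {Y : C} {i : ℕ}
    (hf : ∀ y : Ext S.X₂ Y i, (Ext.mk₀ S.f).comp y (zero_add i) = 0)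
    (h₃ : Subsingleton (Ext S.X₃ Y (1 + i))) : Subsingleton (Ext S.X₁ Y i) := by
  have h0 : ∀ y : Ext S.X₁ Y i, y = 0 := fun y => by
    obtain ⟨z, rfl⟩ := Ext.contravariant_sequence_exact₁ hS Y y rfl (h₃.elim _ 0)
    exact hf z
  exact ⟨fun y z => (h0 y).trans (h0 z).symm⟩

section Factor

variable {hS : S.ShortExact} {W : C} {a : Ext S.X₃ W 1} {b : W ⟶ S.X₁}

lemma GradeGE.X₁_of_extClass_factor (hab : a.comp (Ext.mk₀ b) (add_zero 1) = hS.extClass) {N : C}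
    {k : ℕ} (hW : GradeGE N W k) (h₂ : GradeGE N S.X₂ k) : GradeGE N S.X₁ k := by
  refine gradeGE_iff.2 fun i hi e => ?_
  cases i with
  | zero =>
    have := hS.mono_f
    refine Ext.postcomp_mk₀_injective_of_mono N S.f ?_
    exact (gradeGE_iff.1 h₂ 0 hi _).trans (map_zero _).symm
  | succ i =>
    obtain ⟨x, rfl⟩ := Ext.covariant_sequence_exact₁ N hS e (gradeGE_iff.1 h₂ _ hi _) rfl
    rw [← hab, ← Ext.comp_assoc_of_third_deg_zero, gradeGE_iff.1 hW _ hi (x.comp a rfl),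
      Ext.zero_comp]

lemma GradeGE.X₃_of_extClass_factor (hab : a.comp (Ext.mk₀ b) (add_zero 1) = hS.extClass) {N : C}
    {k : ℕ} (hW : GradeGE N W (k + 1)) (h₂ : GradeGE N S.X₂ k) : GradeGE N S.X₃ k := by
  refine gradeGE_iff.2 fun i hi e => ?_
  have he : e.comp hS.extClass rfl = 0 := by
    rw [← hab, ← Ext.comp_assoc_of_third_deg_zero,
      gradeGE_iff.1 hW (i + 1) (by omega) (e.comp a rfl), Ext.zero_comp]
  obtain ⟨x, rfl⟩ := Ext.covariant_sequence_exact₃ N hS e rfl he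
  rw [gradeGE_iff.1 h₂ i hi x, Ext.zero_comp]

lemma extClass_comp_eq_zero_of_factor (hab : a.comp (Ext.mk₀ b) (add_zero 1) = hS.extClass)
    {d i : ℕ} (hW : HasProjectiveDimensionLT W d) (hi : d ≤ i) {Y : C} (y : Ext S.X₁ Y i) :
    hS.extClass.comp y rfl = 0 := by
  rw [← hab, Ext.comp_assoc_of_second_deg_zero,
    ((Ext.mk₀ b).comp y (zero_add i)).eq_zero_of_hasProjectiveDimensionLT d hi, Ext.comp_zero]

lemma hasProjectiveDimensionLT_X₁_of_extClass_factor
    (hab : a.comp (Ext.mk₀ b) (add_zero 1) = hS.extClass) {d : ℕ}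
    (hW : HasProjectiveDimensionLT W d) (h₂ : HasProjectiveDimensionLT S.X₂ d) :
    HasProjectiveDimensionLT S.X₁ d := by
  refine (hasProjectiveDimensionLT_iff _ _).2 fun i hi Y y => ?_
  obtain ⟨z, rfl⟩ := Ext.contravariant_sequence_exact₁ hS Y y rfl
    (extClass_comp_eq_zero_of_factor hab hW hi y)
  rw [z.eq_zero_of_hasProjectiveDimensionLT d hi, Ext.comp_zero]

lemma hasProjectiveDimensionLT_X₃_of_extClass_factor
    (hab : a.comp (Ext.mk₀ b) (add_zero 1) = hS.extClass) {d : ℕ}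
    (hW : HasProjectiveDimensionLT W d) (h₂ : HasProjectiveDimensionLT S.X₂ (d + 1)) :
    HasProjectiveDimensionLT S.X₃ (d + 1) := by
  refine (hasProjectiveDimensionLT_iff _ _).2 fun i hi Y z => ?_
  obtain ⟨i, rfl⟩ : ∃ j, i = 1 + j := Nat.exists_eq_add_of_le (by omega)
  obtain ⟨y, rfl⟩ := Ext.contravariant_sequence_exact₃ hS Y z
    (Ext.eq_zero_of_hasProjectiveDimensionLT _ (d + 1) hi) rfl
  exact extClass_comp_eq_zero_of_factor hab hW (by omega) y

lemma exists_extClass_factor {T : ShortComplex C} (hS : S.ShortExact) (hT : T.ShortExact)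
    (φ : S ⟶ T) [IsIso φ.τ₃] {W : C} (u : S.X₁ ⟶ W) (b : W ⟶ T.X₁) (hub : u ≫ b = φ.τ₁) :
    ∃ a : Ext T.X₃ W 1, a.comp (Ext.mk₀ b) (add_zero 1) = hT.extClass := by
  refine ⟨(Ext.mk₀ (inv φ.τ₃)).comp (hS.extClass.comp (Ext.mk₀ u) (add_zero 1)) (zero_add 1), ?_⟩
  rw [Ext.comp_assoc_of_third_deg_zero, Ext.comp_assoc_of_third_deg_zero, Ext.mk₀_comp_mk₀, hub,
    hS.extClass_naturality hT φ, Ext.mk₀_comp_mk₀_assoc, IsIso.inv_hom_id, Ext.mk₀_id_comp]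

end Factor

end ConnectingClass

section ExactAdjunction

open Abelian Limits

variable {C D : Type*} [Category* C] [Abelian C] [Category* D] [Abelian D]

lemma exists_projective_shortExact [EnoughProjectives C] (M : C) :
    ∃ (Z P : C) (i : Z ⟶ P) (p : P ⟶ M) (w : i ≫ p = 0),
      Projective P ∧ (ShortComplex.mk i p w).ShortExact :=
  ⟨_, _, _, Projective.π M, kernel.condition _, inferInstance,
    { exact := ShortComplex.exact_kernel _ }⟩

variable {F : C ⥤ D} {G : D ⥤ C} [F.Additive] [PreservesFiniteLimits F] [PreservesFiniteColimits F]

lemma hasProjectiveDimensionLT_map [EnoughProjectives C] [F.PreservesProjectiveObjects] {M : C}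
    {d : ℕ} (h : HasProjectiveDimensionLT M d) : HasProjectiveDimensionLT (F.obj M) d := by
  induction d generalizing M with
  | zero =>
    rw [hasProjectiveDimensionLT_zero_iff_isZero] at h ⊢
    exact F.map_isZero h
  | succ d ih =>
    cases d with
    | zero =>
      rw [← projective_iff_hasProjectiveDimensionLT_one] at h ⊢
      infer_instance
    | succ d =>
      obtain ⟨Z, P, i, p, w, hP, hS⟩ := exists_projective_shortExact M
      exact ((hS.map_of_exact F).hasProjectiveDimensionLT_X₃_iff d (F.projective_obj P)).2
        (ih ((hS.hasProjectiveDimensionLT_X₃_iff d hP).1 h))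

variable [G.Additive] [PreservesFiniteLimits G] [PreservesFiniteColimits G]
  [HasExt C] [HasExt D]

lemma mk₀_unit_comp_mapExactFunctor_extClass_comp (adj : F ⊣ G) {S : ShortComplex C}
    (hS : S.ShortExact) {N : D} {d : ℕ} (y : Ext (S.map F).X₁ N d) :
    (Ext.mk₀ (adj.unit.app S.X₃)).comp
        (((hS.map_of_exact F).extClass.comp y (add_comm 1 d)).mapExactFunctor G)
        (zero_add (d + 1)) =
      hS.extClass.comp ((Ext.mk₀ (adj.unit.app S.X₁)).comp (y.mapExactFunctor G) (zero_add d))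
        (add_comm 1 d) := by
  have hFS := hS.map_of_exact F
  let unitMap : S ⟶ (S.map F).map G := S.mapNatTrans adj.unit
  have hnat : hS.extClass.comp (Ext.mk₀ (adj.unit.app S.X₁)) (add_zero 1) =
      (Ext.mk₀ (adj.unit.app S.X₃)).comp (hFS.map_of_exact G).extClass (zero_add 1) :=
    hS.extClass_naturality (hFS.map_of_exact G) unitMap
  rw [Ext.mapExactFunctor_comp, Ext.mapExactFunctor_extClass]
  calc _ = ((Ext.mk₀ (adj.unit.app S.X₃)).comp (hFS.map_of_exact G).extClass (zero_add 1)).comp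
        (y.mapExactFunctor G) (add_comm 1 d) := (Ext.comp_assoc _ _ _ _ _ (by omega)).symm
    _ = (hS.extClass.comp (Ext.mk₀ (adj.unit.app S.X₁)) (add_zero 1)).comp
        (y.mapExactFunctor G) (add_comm 1 d) :=
          congrArg (fun z => Ext.comp z (y.mapExactFunctor G) (add_comm 1 d)) hnat.symm
    _ = _ := Ext.comp_assoc_of_second_deg_zero ..

variable [EnoughProjectives C]

lemma exists_mk₀_unit_comp_mapExactFunctor_eq (adj : F ⊣ G) {M : C} {N : D} {d : ℕ}
    (e : Ext M (G.obj N) d) :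
    ∃ e' : Ext (F.obj M) N d,
      (Ext.mk₀ (adj.unit.app M)).comp (e'.mapExactFunctor G) (zero_add d) = e := by
  induction d generalizing M with
  | zero =>
    obtain ⟨g, rfl⟩ := (Ext.mk₀_bijective _ _).2 e
    refine ⟨Ext.mk₀ ((adj.homEquiv M N).symm g), ?_⟩
    rw [Ext.mapExactFunctor_mk₀, Ext.mk₀_comp_mk₀]
    exact congrArg Ext.mk₀ ((adj.homEquiv_unit ..).symm.trans (Equiv.apply_symm_apply _ g))
  | succ d ih =>
    obtain ⟨Z, P, i, p, w, hP, hS⟩ := exists_projective_shortExact M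
    obtain ⟨y, rfl⟩ := Ext.contravariant_sequence_exact₃ hS _ e (Ext.eq_zero_of_projective _)
      (add_comm 1 d)
    obtain ⟨y', rfl⟩ := ih y
    exact ⟨_, mk₀_unit_comp_mapExactFunctor_extClass_comp adj hS y'⟩

lemma subsingleton_ext_of_adjunction (adj : F ⊣ G) {M : C} {N : D} {d : ℕ}
    (h : Subsingleton (Ext (F.obj M) N d)) : Subsingleton (Ext M (G.obj N) d) := by
  have h0 : ∀ e : Ext M (G.obj N) d, e = 0 := fun e => by
    obtain ⟨e', rfl⟩ := exists_mk₀_unit_comp_mapExactFunctor_eq adj e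
    rw [h.elim e' 0, Ext.mapExactFunctor_zero, Ext.comp_zero]
  exact ⟨fun a b => (h0 a).trans (h0 b).symm⟩

end ExactAdjunction

section FlatRetract

open Abelian Limits

variable {R A : Type} [CommRing R] [CommRing A] {φ : R →+* A} {ψ : A →+* R}

/-- Extension of scalars `A ⊗[R] R/I ≅ A/IA`. -/
noncomputable def extendScalarsQuotientIso (φ : R →+* A) (I : Ideal R) :
    (ModuleCat.extendScalars φ).obj (ModuleCat.of R (R ⧸ I)) ≅ ModuleCat.of A (A ⧸ I.map φ) :=
  letI := φ.toAlgebra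
  (Ideal.qoutMapEquivTensorQout A (I := I)).symm.toModuleIso

lemma hasProjectiveDimensionLT_quotient_map (hφ : φ.Flat) {I : Ideal R} {d : ℕ}
    (h : HasProjectiveDimensionLT (ModuleCat.of R (R ⧸ I)) d) :
    HasProjectiveDimensionLT (ModuleCat.of A (A ⧸ I.map φ)) d := by
  have := ModuleCat.preservesFiniteLimits_extendScalars_of_flat hφ
  have := (ModuleCat.extendRestrictScalarsAdj φ).left_adjoint_additive
  have := Functor.preservesProjectiveObjects_of_adjunction_of_preservesEpimorphisms
    (ModuleCat.extendRestrictScalarsAdj φ)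
  have := hasProjectiveDimensionLT_map (F := ModuleCat.extendScalars φ) h
  exact hasProjectiveDimensionLT_of_iso (extendScalarsQuotientIso φ I) d

lemma subsingleton_ext_of_flat_of_retract (hφ : φ.Flat) (hψ : ψ.comp φ = RingHom.id R)
    {I : Ideal R} {N : ModuleCat.{0} R} {d : ℕ}
    (h : Subsingleton (Ext (ModuleCat.of A (A ⧸ I.map φ))
      ((ModuleCat.restrictScalars ψ).obj N) d)) :
    Subsingleton (Ext (ModuleCat.of R (R ⧸ I)) N d) := by
  have := ModuleCat.preservesFiniteLimits_extendScalars_of_flat hφ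
  have := (ModuleCat.extendRestrictScalarsAdj φ).left_adjoint_additive
  let e : (ModuleCat.restrictScalars φ).obj ((ModuleCat.restrictScalars ψ).obj N) ≅ N :=
    ((ModuleCat.restrictScalarsComp' φ ψ _ rfl).app N).symm ≪≫
      (ModuleCat.restrictScalarsId' _ hψ).app N
  exact subsingleton_ext_of_iso (Iso.refl _) e <|
    subsingleton_ext_of_adjunction (ModuleCat.extendRestrictScalarsAdj φ) <|
      subsingleton_ext_of_iso (extendScalarsQuotientIso φ I).symm (Iso.refl _) h

end FlatRetract

section ColonSequence

open Abelian

variable {R : Type} [CommRing R] {I I₀ B : Ideal R} {v : R}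

/-- Multiplication by `v` as a map `R/(I : v) → R/I`. -/
def colonMul (I : Ideal R) (v : R) : R ⧸ I.colon {v} →ₗ[R] R ⧸ I :=
  Submodule.mapQ _ I (LinearMap.mulRight R v) fun _ => Submodule.mem_colon_singleton.1

lemma colonMul_injective (I : Ideal R) (v : R) : Function.Injective (colonMul I v) := by
  refine LinearMap.ker_eq_bot.1 (LinearMap.ker_eq_bot'.2 fun c hc => ?_)
  obtain ⟨c, rfl⟩ := Submodule.Quotient.mk_surjective _ c
  exact (Submodule.Quotient.mk_eq_zero _).2
    (Submodule.mem_colon_singleton.2 ((Submodule.Quotient.mk_eq_zero I).1 hc))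

lemma colonMul_exact (I : Ideal R) (v : R) : Function.Exact (colonMul I v)
    (Submodule.factor (le_sup_left : I ≤ I ⊔ Ideal.span {v})) := by
  intro y
  obtain ⟨y, rfl⟩ := Submodule.Quotient.mk_surjective _ y
  change (Submodule.Quotient.mk y : R ⧸ (I ⊔ Ideal.span {v})) = 0 ↔ _
  rw [Submodule.Quotient.mk_eq_zero, Submodule.mem_sup]
  constructor
  · rintro ⟨a, ha, _, hb, rfl⟩
    obtain ⟨c, rfl⟩ := Ideal.mem_span_singleton'.1 hb
    refine ⟨Submodule.Quotient.mk c, (Submodule.Quotient.eq I).2 ?_⟩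
    simpa using ha
  · rintro ⟨c, hc⟩
    obtain ⟨c, rfl⟩ := Submodule.Quotient.mk_surjective _ c
    exact ⟨y - c * v, (Submodule.Quotient.eq I).1 hc.symm, c * v,
      Ideal.mul_mem_left _ c (Ideal.mem_span_singleton_self v), sub_add_cancel y _⟩

/-- The colon sequence `R/(I : v) → R/I → R/(I, v)` whose first map is multiplication by `v`. -/
noncomputable def colonSequence (I : Ideal R) (v : R) : ShortComplex (ModuleCat.{0} R) :=
  ModuleCat.shortComplexOfCompEqZero (colonMul I v)
    (Submodule.factor (le_sup_left : I ≤ I ⊔ Ideal.span {v}))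
    (colonMul_exact I v).linearMap_comp_eq_zero

lemma colonSequence_shortExact (I : Ideal R) (v : R) : (colonSequence I v).ShortExact where
  exact := ModuleCat.shortComplex_exact _ (colonMul_exact I v)
  mono_f := (ModuleCat.mono_iff_injective _).2 (colonMul_injective I v)
  epi_g := (ModuleCat.epi_iff_surjective _).2 (Submodule.factor_surjective le_sup_left)

/-- The projections `R/I₀ → R/I` for `I₀ ≤ I` as a morphism of colon sequences. -/
noncomputable def colonSequenceMap (v : R) (hI : I₀ ≤ I) :
    colonSequence I₀ v ⟶ colonSequence I v where
  τ₁ := ModuleCat.ofHom (Submodule.factor (Submodule.colon_mono hI subset_rfl))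
  τ₂ := ModuleCat.ofHom (Submodule.factor hI)
  τ₃ := ModuleCat.ofHom (Submodule.factor (sup_le_sup_right hI _))
  comm₁₂ := ModuleCat.hom_ext (Submodule.linearMap_qext _ rfl)
  comm₂₃ := ModuleCat.hom_ext (Submodule.linearMap_qext _ rfl)

lemma isIso_colonSequenceMap_τ₃ (hI : I₀ ≤ I)
    (hv : I ⊔ Ideal.span {v} = I₀ ⊔ Ideal.span {v}) : IsIso (colonSequenceMap v hI).τ₃ :=
  ⟨ModuleCat.ofHom (Submodule.factor hv.le),
    ModuleCat.hom_ext (Submodule.linearMap_qext _ rfl),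
    ModuleCat.hom_ext (Submodule.linearMap_qext _ rfl)⟩

lemma exists_colonSequence_extClass_factor (hI : I₀ ≤ I)
    (hv : I ⊔ Ideal.span {v} = I₀ ⊔ Ideal.span {v}) (h₀ : I₀.colon {v} ≤ B)
    (hB : B ≤ I.colon {v}) :
    ∃ a : Ext (colonSequence I v).X₃ (ModuleCat.of R (R ⧸ B)) 1,
      a.comp (Ext.mk₀ (ModuleCat.ofHom (Submodule.factor hB))) (add_zero 1) =
        (colonSequence_shortExact I v).extClass := by
  have := isIso_colonSequenceMap_τ₃ hI hv
  exact exists_extClass_factor (colonSequence_shortExact I₀ v) _ (colonSequenceMap v hI)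
    (ModuleCat.ofHom (Submodule.factor h₀)) _
    (ModuleCat.hom_ext (Submodule.linearMap_qext _ rfl))

lemma exists_colonSequence_f_eq_smul (hv : I.colon {v} ≤ I) :
    ∃ g : (colonSequence I v).X₁ ⟶ (colonSequence I v).X₂, (colonSequence I v).f = v • g :=
  ⟨ModuleCat.ofHom (Submodule.factor hv), ModuleCat.hom_ext <| Submodule.linearMap_qext _ <|
    LinearMap.ext fun f => congrArg Submodule.Quotient.mk (mul_comm f v)⟩

lemma ext_smul_eq_zero_of_source {N M : ModuleCat.{0} R} {i : ℕ} (hN : ∀ y : N, v • y = 0)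
    (e : Ext N M i) : v • e = 0 := by
  have hid : v • 𝟙 N = 0 := ModuleCat.hom_ext (LinearMap.ext hN)
  rw [← Ext.mk₀_id_comp e, ← Ext.smul_comp, ← Ext.mk₀_smul, hid, Ext.mk₀_zero, Ext.zero_comp]

lemma ext_smul_eq_zero_of_target {N M : ModuleCat.{0} R} {i : ℕ} (hM : ∀ y : M, v • y = 0)
    (e : Ext N M i) : v • e = 0 := by
  have hid : v • 𝟙 M = 0 := ModuleCat.hom_ext (LinearMap.ext hM)
  rw [← Ext.comp_mk₀_id e, ← Ext.comp_smul, ← Ext.mk₀_smul, hid, Ext.mk₀_zero, Ext.comp_zero]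

lemma gradeGE_quotient_sup_span_iff {N : ModuleCat.{0} R} (hN : ∀ y : N, v • y = 0)
    (hv : I.colon {v} = I) {k : ℕ} :
    GradeGE N (ModuleCat.of R (R ⧸ (I ⊔ Ideal.span {v}))) k ↔
      GradeGE N (ModuleCat.of R (R ⧸ I)) (k + 1) := by
  have hS := colonSequence_shortExact I v
  obtain ⟨g, hg⟩ := exists_colonSequence_f_eq_smul hv.le
  constructor
  · intro h
    have h₁ : GradeGE N (ModuleCat.of R (R ⧸ I.colon {v})) (k + 1) := by
      refine GradeGE.X₁_of_comp_eq_zero hS (fun i e => ?_) h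
      rw [hg, Ext.mk₀_smul, Ext.comp_smul]
      exact ext_smul_eq_zero_of_source hN _
    rwa [hv] at h₁
  · intro h
    have h₁ : GradeGE N (ModuleCat.of R (R ⧸ I.colon {v})) (k + 1) := by rwa [hv]
    exact GradeGE.X₃ hS h₁ (h.mono k.le_succ)

lemma hasProjectiveDimensionLT_quotient_sup_span (hv : I.colon {v} = I) {d : ℕ}
    (h : HasProjectiveDimensionLT (ModuleCat.of R (R ⧸ I)) d) :
    HasProjectiveDimensionLT (ModuleCat.of R (R ⧸ (I ⊔ Ideal.span {v}))) (d + 1) := by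
  have h₁ : HasProjectiveDimensionLT (ModuleCat.of R (R ⧸ I.colon {v})) d := by rwa [hv]
  exact (colonSequence_shortExact I v).hasProjectiveDimensionLT_X₃ d h₁
    (hasProjectiveDimensionLT_of_ge (ModuleCat.of R (R ⧸ I)) d (d + 1) d.le_succ)

lemma subsingleton_ext_quotient_of_sup_span {Y : ModuleCat.{0} R} (hY : ∀ y : Y, v • y = 0)
    (hv : I.colon {v} = I) {i : ℕ}
    (h : Subsingleton (Ext (ModuleCat.of R (R ⧸ (I ⊔ Ideal.span {v}))) Y (1 + i))) :
    Subsingleton (Ext (ModuleCat.of R (R ⧸ I)) Y i) := by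
  obtain ⟨g, hg⟩ := exists_colonSequence_f_eq_smul hv.le
  have h₁ : Subsingleton (Ext (ModuleCat.of R (R ⧸ I.colon {v})) Y i) := by
    refine subsingleton_ext_X₁_of_comp_eq_zero (colonSequence_shortExact I v) (fun y => ?_) h
    rw [hg, Ext.mk₀_smul, Ext.smul_comp]
    exact ext_smul_eq_zero_of_target hY _
  rwa [hv] at h₁

end ColonSequence

section FlatRetractAdjoin

open Abelian

variable {R A : Type} [CommRing R] [CommRing A] {φ : R →+* A} {ψ : A →+* R} {I : Ideal R} {d : ℕ}

lemma hasProjectiveDimensionLT_quotient_map_iff (hφ : φ.Flat) (hψ : ψ.comp φ = RingHom.id R) :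
    HasProjectiveDimensionLT (ModuleCat.of A (A ⧸ I.map φ)) d ↔
      HasProjectiveDimensionLT (ModuleCat.of R (R ⧸ I)) d := by
  refine ⟨fun h => .mk fun i hi N e => ?_, hasProjectiveDimensionLT_quotient_map hφ⟩
  exact (subsingleton_ext_of_flat_of_retract hφ hψ
    (HasProjectiveDimensionLT.subsingleton (ModuleCat.of A (A ⧸ I.map φ)) d i hi _)).elim e 0

lemma hasProjectiveDimensionLT_quotient_map_sup_span_iff (hφ : φ.Flat)
    (hψ : ψ.comp φ = RingHom.id R) {v : A} (hψv : ψ v = 0) (hv : (I.map φ).colon {v} = I.map φ) :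
    HasProjectiveDimensionLT (ModuleCat.of A (A ⧸ (I.map φ ⊔ Ideal.span {v}))) (d + 1) ↔
      HasProjectiveDimensionLT (ModuleCat.of A (A ⧸ I.map φ)) d := by
  refine ⟨fun h => ?_, hasProjectiveDimensionLT_quotient_sup_span hv⟩
  refine (hasProjectiveDimensionLT_quotient_map_iff hφ hψ).2 (.mk fun i hi N e => ?_)
  refine (subsingleton_ext_of_flat_of_retract hφ hψ (subsingleton_ext_quotient_of_sup_span ?_ hv
    (HasProjectiveDimensionLT.subsingleton _ (d + 1) (1 + i) (by omega) _))).elim e 0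
  intro y
  rw [ModuleCat.restrictScalars.smul_def, hψv, zero_smul]
  rfl

end FlatRetractAdjoin

section RegularSequences

variable {R : Type} [CommRing R] {m I : Ideal R}

lemma smul_quotient_eq_zero {r : R} (hr : r ∈ m) (y : ModuleCat.of R (R ⧸ m)) : r • y = 0 := by
  obtain ⟨y, rfl⟩ := Submodule.Quotient.mk_surjective _ y
  exact (Submodule.Quotient.mk_eq_zero _).2 (Ideal.mul_mem_right _ _ hr)

lemma smul_top_quotient_lt_top (hI : I ≤ m) (hm : m ≠ ⊤) :
    m • (⊤ : Submodule R (R ⧸ I)) < ⊤ := by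
  have hle : m • (⊤ : Submodule R (R ⧸ I)) ≤ Submodule.map I.mkQ m := by
    rw [← Submodule.range_mkQ I, LinearMap.range_eq_map, ← Submodule.map_smul'']
    exact Submodule.map_mono Ideal.mul_le_left
  refine lt_top_iff_ne_top.2 fun h => hm (top_le_iff.1 ?_)
  rw [h, top_le_iff] at hle
  rw [← Submodule.comap_top I.mkQ, ← hle, Submodule.comap_map_mkQ]
  exact sup_le hI le_rfl

lemma exists_isRegular_iff_gradeGE [IsNoetherianRing R] (hI : I ≤ m) (hm : m ≠ ⊤) (k : ℕ) :
    (∃ rs : List R, rs.length = k ∧ (∀ r ∈ rs, r ∈ m) ∧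
      RingTheory.Sequence.IsRegular (R ⧸ I) rs) ↔
      GradeGE (ModuleCat.of R (R ⧸ m)) (ModuleCat.of R (R ⧸ I)) k := by
  have : Module.Finite R (ModuleCat.of R (R ⧸ I)) := inferInstanceAs (Module.Finite R (R ⧸ I))
  have : Module.Finite R (ModuleCat.of R (R ⧸ m)) := inferInstanceAs (Module.Finite R (R ⧸ m))
  have hsupp : Module.support R (ModuleCat.of R (R ⧸ m)) = PrimeSpectrum.zeroLocus m := by
    rw [Module.support_eq_zeroLocus, Ideal.annihilator_quotient]
  constructor
  · rintro ⟨rs, rfl, hrs, hreg⟩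
    exact ModuleCat.subsingleton_ext_of_exists_isRegular m _ hsupp.subset
      (ModuleCat.of R (R ⧸ I)) (smul_top_quotient_lt_top hI hm) rs hrs hreg
  · exact ModuleCat.exists_isRegular_of_exists_subsingleton_ext m k (ModuleCat.of R (R ⧸ I))
      (smul_top_quotient_lt_top hI hm) _ hsupp

lemma colon_singleton_eq_of_isSMulRegular {r : R} (hr : IsSMulRegular (R ⧸ I) r) :
    I.colon {r} = I := by
  refine le_antisymm (fun f hf => ?_) Ideal.le_colon
  rw [← Submodule.Quotient.mk_eq_zero I]
  refine isSMulRegular_iff_right_eq_zero_of_smul.1 hr _ ?_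
  rw [← Submodule.Quotient.mk_smul, Submodule.Quotient.mk_eq_zero, smul_eq_mul, mul_comm]
  exact Submodule.mem_colon_singleton.1 hf

lemma lt_sup_span_of_colon_eq (hI : I ≠ ⊤) {r : R} (hr : I.colon {r} = I) :
    I < I ⊔ Ideal.span {r} := by
  refine left_lt_sup.2 fun h => hI ?_
  rw [← hr, Submodule.colon_eq_top_iff_subset, Set.singleton_subset_iff]
  exact (Ideal.span_singleton_le_iff_mem I).1 h

lemma exists_not_gradeGE [IsNoetherianRing R] (hI : I ≤ m) (hm : m ≠ ⊤) :
    ∃ d, ¬ GradeGE (ModuleCat.of R (R ⧸ m)) (ModuleCat.of R (R ⧸ I)) d := by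
  induction I using WellFoundedGT.induction with
  | ind I ih =>
    by_contra! hall
    obtain ⟨rs, hlen, hmem, hreg⟩ := (exists_isRegular_iff_gradeGE hI hm 1).2 (hall 1)
    obtain ⟨r, rfl⟩ := List.length_eq_one_iff.1 hlen
    have hrm : r ∈ m := hmem r (List.mem_singleton_self r)
    have hr : I.colon {r} = I := colon_singleton_eq_of_isSMulRegular
      ((RingTheory.Sequence.isRegular_cons_iff _ _ _).1 hreg).1
    obtain ⟨d, hd⟩ := ih _ (lt_sup_span_of_colon_eq (ne_top_of_le_ne_top hm hI) hr)
      (sup_le hI ((Ideal.span_singleton_le_iff_mem _).2 hrm))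
    exact hd ((gradeGE_quotient_sup_span_iff (smul_quotient_eq_zero hrm) hr).2 (hall (d + 1)))

end RegularSequences

section SetFamilies

variable {σ : Type*} {v x : σ} {U A B : Set (Finset σ)}

/-- The combinatorial counterpart of `(I, v)` for the squarefree monomial ideal `I` whose set of
supports of squarefree monomials is `U`. -/
def adjoinSet (v : σ) (U : Set (Finset σ)) : Set (Finset σ) := {G | v ∈ G ∨ G ∈ U}

/-- The combinatorial counterpart of `I_A + x I_B`. -/
def mixSet (x : σ) (A B : Set (Finset σ)) : Set (Finset σ) :=
  {G | x ∉ G ∧ G ∈ A ∨ x ∈ G ∧ G ∈ B}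

lemma isUpperSet_mixSet (hA : IsUpperSet A) (hB : IsUpperSet B) (hAB : A ⊆ B) :
    IsUpperSet (mixSet x A B) := by
  rintro G H hGH (⟨-, hG⟩ | ⟨hx, hG⟩)
  · by_cases hx : x ∈ H
    · exact Or.inr ⟨hx, hB hGH (hAB hG)⟩
    · exact Or.inl ⟨hx, hA hGH hG⟩
  · exact Or.inr ⟨hGH hx, hB hGH hG⟩

lemma adjoinSet_mixSet_self : adjoinSet x (mixSet x A B) = adjoinSet x A := by
  ext G
  by_cases h : x ∈ G <;> simp [adjoinSet, mixSet, h]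

lemma mixSet_univ : mixSet x A Set.univ = adjoinSet x A := by
  ext G
  by_cases h : x ∈ G <;> simp [adjoinSet, mixSet, h]

variable [DecidableEq σ]

/-- The combinatorial counterpart of `I : v`. -/
def colonSet (v : σ) (U : Set (Finset σ)) : Set (Finset σ) := {G | insert v G ∈ U}

/-- The combinatorial counterpart of the ideal generated by the monomials of `I` prime to `v`. -/
def eraseSet (v : σ) (U : Set (Finset σ)) : Set (Finset σ) := {G | G.erase v ∈ U}

lemma isUpperSet_colonSet (hU : IsUpperSet U) : IsUpperSet (colonSet v U) :=
  fun _ _ hGH hG => hU (Finset.insert_subset_insert v hGH) hG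

lemma isUpperSet_eraseSet (hU : IsUpperSet U) : IsUpperSet (eraseSet v U) :=
  fun _ _ hGH hG => hU (Finset.erase_subset_erase v hGH) hG

lemma subset_colonSet (hU : IsUpperSet U) : U ⊆ colonSet v U :=
  fun G hG => hU (Finset.subset_insert v G) hG

lemma eraseSet_subset (hU : IsUpperSet U) : eraseSet v U ⊆ U :=
  fun G hG => hU (Finset.erase_subset v G) hG

lemma colonSet_comm : colonSet v (colonSet x U) = colonSet x (colonSet v U) := by
  ext G
  simp only [colonSet, Set.mem_ofPred_eq, Finset.insert_comm]

lemma colonSet_mono (h : A ⊆ B) : colonSet v A ⊆ colonSet v B :=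
  fun _ hG => h hG

lemma colonSet_eraseSet : colonSet v (eraseSet v U) = eraseSet v U := by
  ext G
  simp [colonSet, eraseSet]

lemma adjoinSet_eraseSet : adjoinSet v (eraseSet v U) = adjoinSet v U := by
  ext G
  by_cases h : v ∈ G <;> simp [adjoinSet, eraseSet, h]

lemma colonSet_mixSet (hvx : v ≠ x) :
    colonSet v (mixSet x A B) = mixSet x (colonSet v A) (colonSet v B) := by
  ext G
  simp [colonSet, mixSet, hvx.symm]

lemma colonSet_mixSet_self (hB : colonSet x B = B) : colonSet x (mixSet x A B) = B := by
  conv_rhs => rw [← hB]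
  ext G
  simp [colonSet, mixSet]

lemma eraseSet_mixSet_subset (hA : IsUpperSet A) : eraseSet x (mixSet x A B) ⊆ A := by
  rintro G (⟨-, hG⟩ | ⟨hG, -⟩)
  · exact hA (Finset.erase_subset x G) hG
  · exact absurd hG (Finset.notMem_erase x G)

lemma exists_ssubset_colonSet (hA : IsUpperSet A) (hAx : colonSet x A = A) (hne : A.Nonempty)
    (hA₀ : ∅ ∉ A) : ∃ v ≠ x, A ⊂ colonSet v A := by
  obtain ⟨F, hF⟩ := exists_minimal_of_wellFoundedLT (· ∈ A) hne
  have herase {w : σ} (hw : w ∈ F) : F.erase w ∉ A := fun h =>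
    Finset.notMem_erase w F (hF.le_of_le h (Finset.erase_subset w F) hw)
  obtain ⟨v, hv⟩ : F.Nonempty :=
    Finset.nonempty_iff_ne_empty.2 fun h => hA₀ (h ▸ hF.prop)
  refine ⟨v, ?_, ssubset_iff_subset_ne.2 ⟨subset_colonSet hA, fun h => herase hv ?_⟩⟩
  · rintro rfl
    refine herase hv (hAx.subset ?_)
    rw [colonSet, Set.mem_ofPred_eq, Finset.insert_erase hv]
    exact hF.prop
  · rw [h, colonSet, Set.mem_ofPred_eq, Finset.insert_erase hv]
    exact hF.prop

/-- A property `P` of squarefree monomial ideals with the formal behaviour of a depth or projective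
dimension bound under `I ↦ I : v` and `I ↦ (I, x)`; `Q` is the bound shifted by one. -/
structure ColonCompatible (x : σ) (P Q : Set (Finset σ) → Prop) : Prop where
  colon : ∀ {U} (v : σ), IsUpperSet U → P U → P (colonSet v U)
  of_colon_of_adjoin : ∀ {U}, IsUpperSet U → P (colonSet x U) → P (adjoinSet x U) → P U
  adjoin : ∀ {U B}, IsUpperSet U → eraseSet x U ⊆ B → B ⊆ colonSet x U → Q B → P U →
    P (adjoinSet x U)
  adjoin_iff : ∀ {U}, IsUpperSet U → colonSet x U = U → (P (adjoinSet x U) ↔ Q U)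

namespace ColonCompatible

variable [Finite σ] {P Q : Set (Finset σ) → Prop}

lemma of_mixSet (h : ColonCompatible x P Q) (hA : IsUpperSet A) (hB : IsUpperSet B)
    (hAx : colonSet x A = A) (hBx : colonSet x B = B) (hne : A.Nonempty)
    (hAB : ∀ v, colonSet v A ⊆ B) (hP : P (mixSet x A B)) : Q A := by
  induction A using WellFoundedGT.induction generalizing B with
  | ind A ih =>
    by_cases hB₀ : ∅ ∈ B
    · have hB' : B = Set.univ := Set.eq_univ_of_forall fun G => hB (Finset.empty_subset G) hB₀
      rw [hB', mixSet_univ] at hP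
      exact (h.adjoin_iff hA hAx).1 hP
    have hsub : A ⊆ B := hAx ▸ hAB x
    obtain ⟨v, hvx, hlt⟩ := exists_ssubset_colonSet hA hAx hne fun h₀ => hB₀ (hsub h₀)
    have hmix := isUpperSet_mixSet (x := x) hA hB hsub
    have hQ : Q (colonSet v A) := by
      refine ih _ hlt (isUpperSet_colonSet hA) (isUpperSet_colonSet hB) ?_ ?_
        (hne.mono hlt.subset) (fun w => ?_) (colonSet_mixSet hvx ▸ h.colon v hmix hP)
      · rw [colonSet_comm, hAx]
      · rw [colonSet_comm, hBx]
      · rw [colonSet_comm]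
        exact colonSet_mono (hAB w)
    have hadj : P (adjoinSet x (mixSet x A B)) := by
      refine h.adjoin hmix ((eraseSet_mixSet_subset hA).trans hlt.subset) ?_ hQ hP
      rw [colonSet_mixSet_self hBx]
      exact hAB v
    rw [adjoinSet_mixSet_self] at hadj
    exact (h.adjoin_iff hA hAx).1 hadj

lemma mixSet_iff (h : ColonCompatible x P Q) (hA : IsUpperSet A) (hB : IsUpperSet B)
    (hAx : colonSet x A = A) (hBx : colonSet x B = B) (hne : A.Nonempty)
    (hAB : ∀ v, colonSet v A ⊆ B) : P (mixSet x A B) ↔ Q A ∧ P B := by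
  have hmix : IsUpperSet (mixSet x A B) := isUpperSet_mixSet hA hB (hAx ▸ hAB x)
  constructor
  · exact fun hP => ⟨h.of_mixSet hA hB hAx hBx hne hAB hP,
      colonSet_mixSet_self hBx ▸ h.colon x hmix hP⟩
  · rintro ⟨hQ, hP⟩
    refine h.of_colon_of_adjoin hmix ?_ ?_
    · rwa [colonSet_mixSet_self hBx]
    · rwa [adjoinSet_mixSet_self, h.adjoin_iff hA hAx]

end ColonCompatible

end SetFamilies

section SquarefreeIdeals

variable (K : Type) [Field K] {σ : Type}

/-- The squarefree monomial ideal generated by the monomials `sqMon K F` with `F ∈ U`. When `U` is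
an upper set it is the set of supports of the squarefree monomials in the ideal. -/
noncomputable def sqIdeal (U : Set (Finset σ)) : Ideal (MvPolynomial σ K) :=
  Ideal.span (sqMon K '' U)

lemma sqMon_eq_monomial (F : Finset σ) :
    sqMon K F = monomial (∑ i ∈ F, Finsupp.single i 1) 1 :=
  (monomial_sum_one F fun i => Finsupp.single i 1).symm

variable {K}

lemma sum_single_one_apply [DecidableEq σ] (F : Finset σ) (j : σ) :
    (∑ i ∈ F, Finsupp.single i 1 : σ →₀ ℕ) j = if j ∈ F then 1 else 0 := by
  simp [Finsupp.finsetSum_apply, Finsupp.single_apply]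

lemma sum_single_one_le_iff {F : Finset σ} {s : σ →₀ ℕ} :
    (∑ i ∈ F, Finsupp.single i 1 : σ →₀ ℕ) ≤ s ↔ F ⊆ s.support := by
  classical
  simp only [Finsupp.le_def, sum_single_one_apply, Finset.subset_iff, Finsupp.mem_support_iff,
    ← Nat.one_le_iff_ne_zero]
  refine forall_congr' fun i => ?_
  split_ifs with hi <;> simp [hi]

lemma support_sum_single_one (F : Finset σ) :
    (∑ i ∈ F, Finsupp.single i 1 : σ →₀ ℕ).support = F := by
  classical
  ext j
  simp [Finsupp.mem_support_iff, sum_single_one_apply]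

variable {U V : Set (Finset σ)} {v : σ}

lemma mem_sqIdeal_iff_exists {f : MvPolynomial σ K} :
    f ∈ sqIdeal K U ↔ ∀ s ∈ f.support, ∃ F ∈ U, F ⊆ s.support := by
  have h : sqMon K '' U = (fun s => monomial s (1 : K)) ''
      ((fun F : Finset σ => (∑ i ∈ F, Finsupp.single i 1 : σ →₀ ℕ)) '' U) := by
    rw [Set.image_image]
    exact Set.image_congr fun F _ => sqMon_eq_monomial K F
  rw [sqIdeal, h, mem_ideal_span_monomial_image]
  simp only [Set.exists_mem_image, sum_single_one_le_iff]

lemma mem_sqIdeal (hU : IsUpperSet U) {f : MvPolynomial σ K} :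
    f ∈ sqIdeal K U ↔ ∀ s ∈ f.support, s.support ∈ U := by
  rw [mem_sqIdeal_iff_exists]
  exact ⟨fun h s hs => let ⟨_, hF, hFs⟩ := h s hs; hU hFs hF,
    fun h s hs => ⟨_, h s hs, subset_rfl⟩⟩

lemma sqMon_mem_sqIdeal (hU : IsUpperSet U) {F : Finset σ} : sqMon K F ∈ sqIdeal K U ↔ F ∈ U := by
  classical
  rw [mem_sqIdeal hU, sqMon_eq_monomial, support_monomial, if_neg one_ne_zero]
  simp [support_sum_single_one]

lemma sqIdeal_mono (h : U ⊆ V) : sqIdeal K U ≤ sqIdeal K V :=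
  Ideal.span_mono (Set.image_mono h)

lemma sqIdeal_adjoinSet (v : σ) (U : Set (Finset σ)) :
    sqIdeal K (adjoinSet v U) = sqIdeal K U ⊔ Ideal.span {X v} := by
  apply le_antisymm
  · refine Ideal.span_le.2 ?_
    rintro _ ⟨G, hG | hG, rfl⟩
    · refine Ideal.mem_sup_right (Ideal.mem_span_singleton.2 ?_)
      exact Finset.dvd_prod_of_mem (fun i => (X i : MvPolynomial σ K)) hG
    · exact Ideal.mem_sup_left (Ideal.subset_span ⟨G, hG, rfl⟩)
  · refine sup_le (sqIdeal_mono fun G hG => Or.inr hG) ?_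
    rw [Ideal.span_singleton_le_iff_mem]
    exact Ideal.subset_span ⟨{v}, Or.inl (Finset.mem_singleton_self v), by simp [sqMon]⟩

variable [DecidableEq σ]

lemma sqIdeal_colonSet (hU : IsUpperSet U) (v : σ) :
    sqIdeal K (colonSet v U) = (sqIdeal K U).colon {X v} := by
  have support_add (s : σ →₀ ℕ) : (Finsupp.single v 1 + s).support = insert v s.support := by
    ext j
    by_cases h : v = j <;> simp [h, eq_comm]
  ext f
  rw [Submodule.mem_colon_singleton, smul_eq_mul, mul_comm, mem_sqIdeal (isUpperSet_colonSet hU),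
    mem_sqIdeal hU, support_X_mul]
  simp [support_add, colonSet]

lemma sqIdeal_colon_eq_self (hU : IsUpperSet U) (hv : colonSet v U = U) :
    (sqIdeal K U).colon {X v} = sqIdeal K U := by
  rw [← sqIdeal_colonSet hU, hv]

lemma sqIdeal_eraseSet_sup_span (v : σ) (U : Set (Finset σ)) :
    sqIdeal K U ⊔ Ideal.span {X v} = sqIdeal K (eraseSet v U) ⊔ Ideal.span {X v} := by
  rw [← sqIdeal_adjoinSet, ← sqIdeal_adjoinSet, adjoinSet_eraseSet]

end SquarefreeIdeals

section PolyDepth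

variable {K : Type} [Field K] {σ τ : Type} {I : Ideal (MvPolynomial σ K)} {k : ℕ}

lemma mem_idealOfVars_iff {f : MvPolynomial σ K} : f ∈ idealOfVars σ K ↔ constantCoeff f = 0 := by
  rw [← pow_one (idealOfVars σ K), mem_pow_idealOfVars_iff', constantCoeff_eq]
  simp [Finsupp.degree_eq_zero_iff]

lemma idealOfVars_ne_top : idealOfVars σ K ≠ ⊤ := by
  rw [Ne, Ideal.eq_top_iff_one, mem_idealOfVars_iff]
  simp

lemma sqIdeal_le_idealOfVars {U : Set (Finset σ)} (hU : ∅ ∉ U) :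
    sqIdeal K U ≤ idealOfVars σ K := by
  refine Ideal.span_le.2 ?_
  rintro _ ⟨F, hF, rfl⟩
  obtain ⟨i, hi⟩ : F.Nonempty := Finset.nonempty_iff_ne_empty.2 fun h => hU (h ▸ hF)
  rw [SetLike.mem_coe, mem_idealOfVars_iff, sqMon, map_prod]
  exact Finset.prod_eq_zero hi (constantCoeff_X K i)

lemma le_polyDepth_iff_gradeGE [Finite σ] (hI : I ≤ idealOfVars σ K) :
    k ≤ polyDepth K I ↔ GradeGE
      (ModuleCat.of (MvPolynomial σ K) (MvPolynomial σ K ⧸ idealOfVars σ K))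
      (ModuleCat.of (MvPolynomial σ K) (MvPolynomial σ K ⧸ I)) k := by
  set s := {k | GradeGE (ModuleCat.of (MvPolynomial σ K) (MvPolynomial σ K ⧸ idealOfVars σ K))
    (ModuleCat.of (MvPolynomial σ K) (MvPolynomial σ K ⧸ I)) k}
  have depth_eq : polyDepth K I = sSup s :=
    congrArg sSup (Set.ext fun _ => exists_isRegular_iff_gradeGE hI idealOfVars_ne_top _)
  have bddAbove : BddAbove s := by
    obtain ⟨d, hd⟩ := exists_not_gradeGE hI (idealOfVars_ne_top (K := K))
    exact ⟨d, fun k hk => le_of_not_ge fun h => hd (hk.mono h)⟩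
  have nonempty : s.Nonempty := ⟨0, fun i hi => absurd hi i.not_lt_zero⟩
  rw [depth_eq]
  exact ⟨fun h => (Nat.sSup_mem nonempty bddAbove).mono h, fun h => le_csSup bddAbove h⟩

lemma polyDepth_comap (φ : MvPolynomial τ K →+* MvPolynomial σ K)
    (ψ : MvPolynomial σ K →+* MvPolynomial τ K) (hφψ : ∀ f, φ (ψ f) = f)
    (hφ : ∀ f, constantCoeff (φ f) = constantCoeff f) :
    polyDepth K (I.comap φ) = polyDepth K I := by
  let e : (MvPolynomial τ K ⧸ I.comap φ) ≃+* (MvPolynomial σ K ⧸ I) :=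
    RingEquiv.ofBijective (Ideal.quotientMap I φ le_rfl)
      ⟨Ideal.quotientMap_injective, Ideal.quotientMap_surjective fun f => ⟨ψ f, hφψ f⟩⟩
  have he : ∀ r y, e.toAddEquiv (r • y) = φ r • e.toAddEquiv y := by
    intro r y
    obtain ⟨y, rfl⟩ := Ideal.Quotient.mk_surjective y
    exact congrArg (Ideal.Quotient.mk I) (map_mul φ r y)
  unfold polyDepth
  congr 1
  ext k
  simp only [Set.mem_ofPred_eq, mem_idealOfVars_iff]
  constructor
  · rintro ⟨rs, rfl, hm, hr⟩
    refine ⟨rs.map φ, List.length_map φ, by simpa [hφ] using hm, ?_⟩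
    refine (AddEquiv.isRegular_congr (e := e.toAddEquiv) ?_).1 hr
    exact List.forall₂_map_right_iff.2 (List.forall₂_same.2 fun r _ => he r)
  · rintro ⟨rs, rfl, hm, hr⟩
    refine ⟨rs.map ψ, List.length_map ψ, ?_, ?_⟩
    · simpa [← hφ, hφψ] using hm
    · refine (AddEquiv.isRegular_congr (e := e.toAddEquiv) ?_).2 hr
      refine List.forall₂_map_left_iff.2 (List.forall₂_same.2 fun r _ y => ?_)
      rw [he, hφψ]

end PolyDepth

section SquarefreeQuotients

open Abelian

variable (K : Type) [Field K] {σ : Type}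

/-- The quotient of the polynomial ring by the squarefree monomial ideal `sqIdeal K U`. -/
noncomputable abbrev sqQuot (U : Set (Finset σ)) : ModuleCat.{0} (MvPolynomial σ K) :=
  ModuleCat.of (MvPolynomial σ K) (MvPolynomial σ K ⧸ sqIdeal K U)

variable {K} [DecidableEq σ] {U V : Set (Finset σ)} {v x : σ}

lemma exists_sqIdeal_extClass_factor (hU : IsUpperSet U) (hV : eraseSet v U ⊆ V)
    (hVU : V ⊆ colonSet v U) :
    ∃ (a : Ext (colonSequence (sqIdeal K U) (X v)).X₃ (sqQuot K V) 1)
      (b : sqQuot K V ⟶ (colonSequence (sqIdeal K U) (X v)).X₁),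
      a.comp (Ext.mk₀ b) (add_zero 1) =
        (colonSequence_shortExact (sqIdeal K U) (X v)).extClass := by
  have hB : sqIdeal K V ≤ (sqIdeal K U).colon {X v} := by
    rw [← sqIdeal_colonSet hU]
    exact sqIdeal_mono hVU
  have h₀ : (sqIdeal K (eraseSet v U)).colon {X v} ≤ sqIdeal K V := by
    rw [sqIdeal_colon_eq_self (isUpperSet_eraseSet hU) colonSet_eraseSet]
    exact sqIdeal_mono hV
  obtain ⟨a, ha⟩ := exists_colonSequence_extClass_factor (sqIdeal_mono (eraseSet_subset hU))
    (sqIdeal_eraseSet_sup_span v U) h₀ hB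
  exact ⟨a, _, ha⟩

lemma colonCompatible_gradeGE {N : ModuleCat.{0} (MvPolynomial σ K)}
    (hN : ∀ (i : σ) (y : N), (X i : MvPolynomial σ K) • y = 0) (x : σ) (k : ℕ) :
    ColonCompatible x (fun U => GradeGE N (sqQuot K U) k)
      (fun U => GradeGE N (sqQuot K U) (k + 1)) where
  colon v hU hP := by
    obtain ⟨a, b, hab⟩ := exists_sqIdeal_extClass_factor (K := K) hU
      (eraseSet_subset (v := v) hU) (subset_colonSet hU)
    rw [sqQuot, sqIdeal_colonSet hU]
    exact GradeGE.X₁_of_extClass_factor hab hP hP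
  of_colon_of_adjoin {U} hU h₁ h₃ := by
    rw [sqQuot, sqIdeal_colonSet hU] at h₁
    rw [sqQuot, sqIdeal_adjoinSet] at h₃
    exact GradeGE.X₂ (colonSequence_shortExact (sqIdeal K U) (X x)) h₁ h₃
  adjoin hU hB hBU hQ hP := by
    obtain ⟨a, b, hab⟩ := exists_sqIdeal_extClass_factor (K := K) hU hB hBU
    rw [sqQuot, sqIdeal_adjoinSet]
    exact GradeGE.X₃_of_extClass_factor hab hQ hP
  adjoin_iff hU hUx := by
    rw [sqQuot, sqIdeal_adjoinSet]
    exact gradeGE_quotient_sup_span_iff (hN x) (sqIdeal_colon_eq_self hU hUx)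

lemma colonCompatible_hasProjectiveDimensionLT (d : ℕ)
    (h : ∀ U : Set (Finset σ), IsUpperSet U → colonSet x U = U →
      (HasProjectiveDimensionLT (sqQuot K (adjoinSet x U)) (d + 1) ↔
        HasProjectiveDimensionLT (sqQuot K U) d)) :
    ColonCompatible x (fun U => HasProjectiveDimensionLT (sqQuot K U) (d + 1))
      (fun U => HasProjectiveDimensionLT (sqQuot K U) d) where
  colon v hU hP := by
    obtain ⟨a, b, hab⟩ := exists_sqIdeal_extClass_factor (K := K) hU
      (eraseSet_subset (v := v) hU) (subset_colonSet hU)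
    rw [sqQuot, sqIdeal_colonSet hU]
    exact hasProjectiveDimensionLT_X₁_of_extClass_factor hab hP hP
  of_colon_of_adjoin {U} hU h₁ h₃ := by
    rw [sqQuot, sqIdeal_colonSet hU] at h₁
    rw [sqQuot, sqIdeal_adjoinSet] at h₃
    exact (colonSequence_shortExact (sqIdeal K U) (X x)).hasProjectiveDimensionLT_X₂ (d + 1) h₁ h₃
  adjoin hU hB hBU hQ hP := by
    obtain ⟨a, b, hab⟩ := exists_sqIdeal_extClass_factor (K := K) hU hB hBU
    rw [sqQuot, sqIdeal_adjoinSet]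
    exact hasProjectiveDimensionLT_X₃_of_extClass_factor hab hQ hP
  adjoin_iff hU hUx := h _ hU hUx

end SquarefreeQuotients

section AdjoinVariable

variable {K : Type} [Field K] {τ σ : Type} (f : τ ↪ σ) {x : σ} {U A B : Set (Finset τ)}

lemma flat_rename : (rename f : MvPolynomial τ K →ₐ[K] MvPolynomial σ K).toRingHom.Flat := by
  classical
  let ρ : Type := ↥(Set.range f)ᶜ
  let g : ρ ⊕ τ ≃ σ := (Equiv.sumComm _ _).trans
    (((Equiv.ofInjective f f.injective).sumCongr (Equiv.refl _)).trans (Equiv.Set.sumCompl _))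
  let e : MvPolynomial ρ (MvPolynomial τ K) ≃ₐ[K] MvPolynomial σ K :=
    (sumAlgEquiv K ρ τ).symm.trans (renameEquiv K g)
  have factorization : (rename f : MvPolynomial τ K →ₐ[K] MvPolynomial σ K).toRingHom =
      (e : MvPolynomial ρ (MvPolynomial τ K) →+* MvPolynomial σ K).comp
        (algebraMap (MvPolynomial τ K) (MvPolynomial ρ (MvPolynomial τ K))) := by
    refine MvPolynomial.ringHom_ext (fun r => ?_) (fun i => ?_)
    · simp [e, algebraMap_eq]
    · simp [e, g, algebraMap_eq]
      rfl
  rw [factorization]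
  exact RingHom.Flat.comp (RingHom.flat_algebraMap_iff.2 inferInstance)
    (RingHom.Flat.of_bijective e.bijective)

lemma constantCoeff_killCompl (p : MvPolynomial σ K) :
    constantCoeff (killCompl f.injective p) = constantCoeff p := by
  have h : (constantCoeff.comp (killCompl f.injective).toRingHom : MvPolynomial σ K →+* K) =
      constantCoeff := by
    refine MvPolynomial.ringHom_ext (fun r => by simp) fun i => ?_
    by_cases hi : i ∈ Set.range f <;> simp [killCompl, hi]
  exact RingHom.congr_fun h p

lemma killCompl_X_eq_zero (hx : x ∉ Set.range f) :
    killCompl f.injective (X x : MvPolynomial σ K) = 0 := by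
  rw [killCompl, aeval_X, dif_neg hx]

lemma comap_killCompl (hx : Set.range f = {x}ᶜ) (I : Ideal (MvPolynomial τ K)) :
    I.comap (killCompl f.injective) = I.map (rename f) ⊔ Ideal.span {X x} := by
  have hxf : x ∉ Set.range f := by simp [hx]
  apply le_antisymm
  · intro p hp
    have h : (Ideal.Quotient.mk (Ideal.span {X x})).comp
        ((rename f).comp (killCompl f.injective)).toRingHom =
          Ideal.Quotient.mk (Ideal.span {(X x : MvPolynomial σ K)}) := by
      refine MvPolynomial.ringHom_ext (fun r => by simp) fun i => ?_
      by_cases hi : i = x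
      · subst hi
        simp [killCompl_X_eq_zero f hxf]
      · obtain ⟨j, rfl⟩ : i ∈ Set.range f := hx ▸ hi
        simp [← rename_X, killCompl_rename_app]
    have hmem : p - rename f (killCompl f.injective p) ∈ Ideal.span {X x} :=
      Ideal.Quotient.eq.1 (RingHom.congr_fun h p).symm
    rw [← sub_add_cancel p (rename f (killCompl f.injective p))]
    exact add_mem (Ideal.mem_sup_right hmem) (Ideal.mem_sup_left (Ideal.mem_map_of_mem _ hp))
  · refine sup_le (Ideal.map_le_iff_le_comap.2 fun p hp => ?_) ?_
    · rwa [Ideal.mem_comap, Ideal.mem_comap, killCompl_rename_app]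
    · rw [Ideal.span_singleton_le_iff_mem, Ideal.mem_comap, killCompl_X_eq_zero f hxf]
      exact I.zero_mem

lemma polyDepth_map_rename_sup_span_X (hx : Set.range f = {x}ᶜ) (I : Ideal (MvPolynomial τ K)) :
    polyDepth K (I.map (rename f) ⊔ Ideal.span {X x}) = polyDepth K I := by
  rw [← comap_killCompl f hx]
  exact polyDepth_comap (killCompl f.injective).toRingHom (rename f).toRingHom
    (killCompl_rename_app f.injective) (constantCoeff_killCompl f)

/-- The combinatorial counterpart of the extension of a squarefree monomial ideal along
`rename f`. -/
def extendSet (f : τ ↪ σ) (U : Set (Finset τ)) : Set (Finset σ) :=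
  {G | G.preimage f f.injective.injOn ∈ U}

lemma preimage_map (F : Finset τ) : (F.map f).preimage f f.injective.injOn = F := by
  ext i
  simp

lemma map_preimage_subset (G : Finset σ) : (G.preimage f f.injective.injOn).map f ⊆ G := by
  intro i hi
  obtain ⟨j, hj, rfl⟩ := Finset.mem_map.1 hi
  exact Finset.mem_preimage.1 hj

lemma isUpperSet_extendSet (hU : IsUpperSet U) : IsUpperSet (extendSet f U) :=
  fun _ _ hGH hG => hU (Finset.monotone_preimage f.injective hGH) hG

lemma map_mem_extendSet {F : Finset τ} : F.map f ∈ extendSet f U ↔ F ∈ U := by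
  rw [extendSet, Set.mem_ofPred_eq, preimage_map]

lemma empty_mem_extendSet : ∅ ∈ extendSet f U ↔ ∅ ∈ U := by
  simp [extendSet]

lemma rename_sqMon (F : Finset τ) : rename f (sqMon K F) = sqMon K (F.map f) := by
  simp [sqMon]

lemma map_rename_sqIdeal (hU : IsUpperSet U) :
    (sqIdeal K U).map (rename f) = sqIdeal K (extendSet f U) := by
  rw [sqIdeal, Ideal.map_span]
  refine le_antisymm (Ideal.span_le.2 ?_) (Ideal.span_le.2 ?_)
  · rintro _ ⟨_, ⟨F, hF, rfl⟩, rfl⟩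
    rw [SetLike.mem_coe, rename_sqMon, sqMon_mem_sqIdeal (isUpperSet_extendSet f hU)]
    exact (map_mem_extendSet f).2 hF
  · rintro _ ⟨G, hG, rfl⟩
    refine Ideal.mem_of_dvd _ (Finset.prod_dvd_prod_of_subset _ _ _ (map_preimage_subset f G)) ?_
    change sqMon K _ ∈ _
    rw [← rename_sqMon]
    exact Ideal.subset_span ⟨_, ⟨_, hG, rfl⟩, rfl⟩

variable [DecidableEq σ]

lemma colonSet_extendSet_self (hx : x ∉ Set.range f) :
    colonSet x (extendSet f U) = extendSet f U := by
  ext G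
  have h : (insert x G).preimage f f.injective.injOn = G.preimage f f.injective.injOn := by
    ext i
    have : f i ≠ x := fun h => hx ⟨i, h⟩
    simp [this]
  simp only [colonSet, extendSet, Set.mem_ofPred_eq, h]

lemma colonSet_extendSet [DecidableEq τ] (w : τ) :
    colonSet (f w) (extendSet f U) = extendSet f (colonSet w U) := by
  ext G
  have h : (insert (f w) G).preimage f f.injective.injOn =
      insert w (G.preimage f f.injective.injOn) := by
    ext i
    simp
  simp only [colonSet, extendSet, Set.mem_ofPred_eq, h]

lemma map_preimage_of_range_eq (hx : Set.range f = {x}ᶜ) (G : Finset σ) :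
    (G.preimage f f.injective.injOn).map f = G.erase x := by
  ext i
  by_cases hi : i = x
  · have hxf (j : τ) : f j ≠ x := fun h => by simpa [h] using hx.subset ⟨j, rfl⟩
    simp [hi, hxf]
  · obtain ⟨j, rfl⟩ : i ∈ Set.range f := hx ▸ hi
    simp [hi]

lemma extendSet_of_colonSet_eq_self (hx : Set.range f = {x}ᶜ) {V : Set (Finset σ)}
    (hV : colonSet x V = V) : extendSet f {F | F.map f ∈ V} = V := by
  ext G
  rw [extendSet, Set.mem_ofPred_eq, Set.mem_ofPred_eq, map_preimage_of_range_eq f hx, ← hV]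
  by_cases hG : x ∈ G <;> simp [colonSet, hG]

lemma colonSet_extendSet_subset [DecidableEq τ] (hx : Set.range f = {x}ᶜ) (hAB : A ⊆ B)
    (hcolon : ∀ w, colonSet w A ⊆ B) (v : σ) : colonSet v (extendSet f A) ⊆ extendSet f B := by
  by_cases hv : v = x
  · rw [hv, colonSet_extendSet_self f (by simp [hx])]
    exact fun G hG => hAB hG
  · obtain ⟨w, rfl⟩ : v ∈ Set.range f := hx ▸ hv
    rw [colonSet_extendSet]
    exact fun G hG => hcolon w hG

end AdjoinVariable

section ProjectiveDimension

open Abelian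

variable {R : Type} [CommRing R]

lemma subsingleton_moduleCatExt_iff (M N : ModuleCat.{0} R) (d : ℕ) :
    Subsingleton (((Ext R (ModuleCat R) (d + 1)).obj (Opposite.op M)).obj N) ↔
      Subsingleton (Abelian.Ext M N (d + 1)) := by
  let P := projectiveResolution M
  have cocycles_eq_coboundaries :
      Subsingleton (((Ext R (ModuleCat R) (d + 1)).obj (Opposite.op M)).obj N) ↔
        ∀ f : P.complex.X (d + 1) ⟶ N, P.complex.d (d + 2) (d + 1) ≫ f = 0 →
          ∃ g : P.complex.X d ⟶ N, P.complex.d (d + 1) d ≫ g = f := by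
    rw [← ModuleCat.isZero_iff_subsingleton, (P.isoExt (R := R) (d + 1) N).isZero_iff,
      ← HomologicalComplex.exactAt_iff_isZero_homology,
      HomologicalComplex.exactAt_iff' _ d (d + 1) (d + 2) (by simp) (by simp),
      ShortComplex.moduleCat_exact_iff]
    rfl
  rw [cocycles_eq_coboundaries, subsingleton_iff_forall_eq 0]
  constructor
  · intro h e
    obtain ⟨f, hf, rfl⟩ := P.extMk_surjective e (d + 2) rfl
    exact (P.extMk_eq_zero_iff f (d + 2) rfl hf d rfl).2 (h f hf)
  · intro h f hf
    exact (P.extMk_eq_zero_iff f (d + 2) rfl hf d rfl).1 (h _)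

variable {M : Type} [AddCommGroup M] [Module R M]

lemma projDim_eq_sInf :
    projDim R M = sInf {d | HasProjectiveDimensionLT (ModuleCat.of R M) (d + 1)} := by
  unfold projDim
  congr 1
  ext d
  simp only [Set.mem_ofPred_eq, subsingleton_moduleCatExt_iff]
  exact ⟨fun h => hasProjectiveDimensionLT_of_enoughInjectives _ _ h,
    fun h N => HasProjectiveDimensionLT.subsingleton _ (d + 1) _ le_rfl N⟩

lemma projDim_lt_iff_hasProjectiveDimensionLT [Nontrivial M]
    (hM : ∃ d, HasProjectiveDimensionLT (ModuleCat.of R M) d) {d : ℕ} :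
    projDim R M < d ↔ HasProjectiveDimensionLT (ModuleCat.of R M) d := by
  obtain ⟨n, hn⟩ := hM
  set s := {d | HasProjectiveDimensionLT (ModuleCat.of R M) (d + 1)}
  have nonempty : s.Nonempty :=
    ⟨n, hasProjectiveDimensionLT_of_ge (ModuleCat.of R M) n (n + 1) n.le_succ⟩
  rw [projDim_eq_sInf]
  constructor
  · intro h
    have hmem : HasProjectiveDimensionLT (ModuleCat.of R M) (sInf s + 1) := Nat.sInf_mem nonempty
    exact hasProjectiveDimensionLT_of_ge (ModuleCat.of R M) (sInf s + 1) d h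
  · intro h
    cases d with
    | zero =>
      rw [hasProjectiveDimensionLT_zero_iff_isZero, ModuleCat.isZero_iff_subsingleton] at h
      exact (not_subsingleton M h).elim
    | succ d => exact Nat.lt_succ_of_le (Nat.sInf_le h)

end ProjectiveDimension

section SquarefreeProjectiveDimension

variable {K : Type} [Field K] {σ : Type} {U : Set (Finset σ)}

lemma sqIdeal_eq_top_iff : sqIdeal K U = ⊤ ↔ ∅ ∈ U := by
  refine ⟨fun h => by_contra fun hU => ?_, fun h => ?_⟩
  · exact idealOfVars_ne_top (top_le_iff.1 (h ▸ sqIdeal_le_idealOfVars (K := K) hU))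
  · exact (Ideal.eq_top_iff_one _).2 (Ideal.subset_span ⟨∅, h, by simp [sqMon]⟩)

lemma hasProjectiveDimensionLT_sqQuot_empty :
    HasProjectiveDimensionLT (sqQuot K (∅ : Set (Finset σ))) 1 := by
  have h : sqIdeal K (∅ : Set (Finset σ)) = ⊥ := by simp [sqIdeal]
  exact hasProjectiveDimensionLT_of_iso (Submodule.quotEquivOfEqBot _ h).symm.toModuleIso 1

lemma hasProjectiveDimensionLT_sqQuot_univ (d : ℕ) :
    HasProjectiveDimensionLT (sqQuot K (Set.univ : Set (Finset σ))) d := by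
  have : Subsingleton (MvPolynomial σ K ⧸ sqIdeal K (Set.univ : Set (Finset σ))) :=
    Ideal.Quotient.subsingleton_iff.2 (sqIdeal_eq_top_iff.2 (Set.mem_univ _))
  have h := (ModuleCat.isZero_of_subsingleton
    (sqQuot K (Set.univ : Set (Finset σ)))).hasProjectiveDimensionLT_zero
  exact hasProjectiveDimensionLT_of_ge _ 0 d d.zero_le

lemma eq_empty_or_eq_univ_of_forall_colonSet_eq [DecidableEq σ] (hU : IsUpperSet U)
    (h : ∀ v, colonSet v U = U) : U = ∅ ∨ U = Set.univ := by
  refine U.eq_empty_or_nonempty.imp_right fun ⟨G, hG⟩ => ?_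
  suffices h₀ : ∅ ∈ U from Set.eq_univ_of_forall fun F => hU (Finset.empty_subset F) h₀
  induction G using Finset.induction_on with
  | empty => exact hG
  | insert v G _ ih => exact ih ((h v).subset hG)

lemma colonSet_eraseSet_comm [DecidableEq σ] {v w : σ} (hvw : v ≠ w) :
    colonSet v (eraseSet w U) = eraseSet w (colonSet v U) := by
  ext G
  simp [colonSet, eraseSet, Finset.erase_insert_of_ne hvw]

lemma hasProjectiveDimensionLT_sqQuot [DecidableEq σ] (T : Finset σ) (hU : IsUpperSet U)
    (hT : ∀ v ∉ T, colonSet v U = U) :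
    HasProjectiveDimensionLT (sqQuot K U) (T.card + 1) := by
  induction T using Finset.induction_on generalizing U with
  | empty =>
    obtain rfl | rfl := eq_empty_or_eq_univ_of_forall_colonSet_eq hU
      fun v => hT v (Finset.notMem_empty v)
    · exact hasProjectiveDimensionLT_sqQuot_empty
    · exact hasProjectiveDimensionLT_sqQuot_univ _
  | insert w T hw ih =>
    have herase : HasProjectiveDimensionLT (sqQuot K (eraseSet w U)) (T.card + 1) := by
      refine ih (isUpperSet_eraseSet hU) fun v hv => ?_
      by_cases hvw : v = w
      · rw [hvw, colonSet_eraseSet]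
      · rw [colonSet_eraseSet_comm hvw, hT v (by simp [hv, hvw])]
    have hcolon : HasProjectiveDimensionLT (sqQuot K (colonSet w U)) (T.card + 1) := by
      refine ih (isUpperSet_colonSet hU) fun v hv => ?_
      by_cases hvw : v = w
      · ext G
        simp [hvw, colonSet]
      · rw [colonSet_comm, hT v (by simp [hv, hvw])]
    have hadjoin : HasProjectiveDimensionLT (sqQuot K (adjoinSet w U)) (T.card + 1 + 1) := by
      rw [← adjoinSet_eraseSet, sqQuot, sqIdeal_adjoinSet]
      exact hasProjectiveDimensionLT_quotient_sup_span
        (sqIdeal_colon_eq_self (isUpperSet_eraseSet hU) colonSet_eraseSet) herase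
    have hcolon_succ : HasProjectiveDimensionLT (sqQuot K (colonSet w U)) (T.card + 1 + 1) :=
      hasProjectiveDimensionLT_of_ge _ (T.card + 1) _ (Nat.le_succ _)
    rw [sqQuot, sqIdeal_colonSet hU] at hcolon_succ
    rw [sqQuot, sqIdeal_adjoinSet] at hadjoin
    rw [Finset.card_insert_of_notMem hw]
    exact (colonSequence_shortExact (sqIdeal K U) (X w)).hasProjectiveDimensionLT_X₂ _
      hcolon_succ hadjoin

lemma projDim_sqIdeal_lt_iff [Finite σ] (hU : IsUpperSet U) (hU₀ : ∅ ∉ U) {d : ℕ} :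
    projDim (MvPolynomial σ K) (MvPolynomial σ K ⧸ sqIdeal K U) < d ↔
      HasProjectiveDimensionLT (sqQuot K U) d := by
  classical
  have := Fintype.ofFinite σ
  have : Nontrivial (MvPolynomial σ K ⧸ sqIdeal K U) :=
    Ideal.Quotient.nontrivial_iff.2 (sqIdeal_eq_top_iff.not.2 hU₀)
  exact projDim_lt_iff_hasProjectiveDimensionLT ⟨_, hasProjectiveDimensionLT_sqQuot Finset.univ hU
    fun v hv => absurd (Finset.mem_univ v) hv⟩

end SquarefreeProjectiveDimension

section MixedIdeals

variable {K : Type} [Field K] {τ σ : Type} (f : τ ↪ σ) {x : σ} {A B U : Set (Finset τ)}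

lemma killCompl_comp_rename : (killCompl f.injective : MvPolynomial σ K →ₐ[K] _).toRingHom.comp
    (rename f).toRingHom = RingHom.id (MvPolynomial τ K) :=
  RingHom.ext (killCompl_rename_app f.injective)

lemma X_smul_quotient_idealOfVars (i : σ)
    (y : ModuleCat.of (MvPolynomial σ K) (MvPolynomial σ K ⧸ idealOfVars σ K)) :
    (X i : MvPolynomial σ K) • y = 0 :=
  smul_quotient_eq_zero (mem_idealOfVars_iff.2 (constantCoeff_X K i)) y

lemma hasProjectiveDimensionLT_sqQuot_extendSet_iff (hU : IsUpperSet U) {d : ℕ} :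
    HasProjectiveDimensionLT (sqQuot K (extendSet f U)) d ↔
      HasProjectiveDimensionLT (sqQuot K U) d := by
  rw [sqQuot, ← map_rename_sqIdeal f hU]
  exact hasProjectiveDimensionLT_quotient_map_iff (flat_rename f) (killCompl_comp_rename f)

lemma hasProjectiveDimensionLT_sqQuot_adjoinSet_iff [DecidableEq σ] (hx : Set.range f = {x}ᶜ)
    {V : Set (Finset σ)} (hV : IsUpperSet V) (hVx : colonSet x V = V) {d : ℕ} :
    HasProjectiveDimensionLT (sqQuot K (adjoinSet x V)) (d + 1) ↔
      HasProjectiveDimensionLT (sqQuot K V) d := by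
  have hupper : IsUpperSet {F : Finset τ | F.map f ∈ V} :=
    fun _ _ hFG hF => hV (Finset.map_subset_map.2 hFG) hF
  have hmap : (sqIdeal K {F : Finset τ | F.map f ∈ V}).map (rename f) = sqIdeal K V := by
    rw [map_rename_sqIdeal f hupper, extendSet_of_colonSet_eq_self f hx hVx]
  have hcolon := sqIdeal_colon_eq_self (K := K) hV hVx
  rw [sqQuot, sqIdeal_adjoinSet, sqQuot, ← hmap]
  rw [← hmap] at hcolon
  exact hasProjectiveDimensionLT_quotient_map_sup_span_iff (flat_rename f)
    (killCompl_comp_rename f) (killCompl_X_eq_zero f (by simp [hx])) hcolon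

variable [Finite σ]

lemma polyDepth_extendSet (hx : Set.range f = {x}ᶜ) (hU : IsUpperSet U) (hU₀ : ∅ ∉ U) :
    polyDepth K (sqIdeal K (extendSet f U)) = polyDepth K (sqIdeal K U) + 1 := by
  classical
  have hV := isUpperSet_extendSet f hU
  have hV₀ : ∅ ∉ extendSet f U := (empty_mem_extendSet f).not.2 hU₀
  have hW₀ : ∅ ∉ adjoinSet x (extendSet f U) := by simp [adjoinSet, hV₀]
  have hdepth : polyDepth K (sqIdeal K (adjoinSet x (extendSet f U))) =
      polyDepth K (sqIdeal K U) := by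
    rw [sqIdeal_adjoinSet, ← map_rename_sqIdeal f hU, polyDepth_map_rename_sup_span_X f hx]
  refine eq_of_forall_le_iff fun k => ?_
  cases k with
  | zero => simp
  | succ k =>
    rw [Nat.add_le_add_iff_right, ← hdepth, le_polyDepth_iff_gradeGE (sqIdeal_le_idealOfVars hV₀),
      le_polyDepth_iff_gradeGE (sqIdeal_le_idealOfVars hW₀)]
    exact ((colonCompatible_gradeGE X_smul_quotient_idealOfVars x k).adjoin_iff hV
      (colonSet_extendSet_self f (by simp [hx]))).symm

variable [DecidableEq τ]

lemma polyDepth_mixSet_extendSet (hx : Set.range f = {x}ᶜ) (hA : IsUpperSet A) (hB : IsUpperSet B)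
    (hne : A.Nonempty) (hB₀ : ∅ ∉ B) (hAB : A ⊆ B) (hcolon : ∀ w, colonSet w A ⊆ B) :
    polyDepth K (sqIdeal K (mixSet x (extendSet f A) (extendSet f B))) =
      min (polyDepth K (sqIdeal K A)) (polyDepth K (sqIdeal K B) + 1) := by
  classical
  have hA₀ : ∅ ∉ A := fun h => hB₀ (hAB h)
  have hmix₀ : ∅ ∉ mixSet x (extendSet f A) (extendSet f B) := by
    simp [mixSet, empty_mem_extendSet, hA₀]
  obtain ⟨F, hF⟩ := hne
  refine eq_of_forall_le_iff fun k => ?_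
  have key := (colonCompatible_gradeGE (K := K) X_smul_quotient_idealOfVars x k).mixSet_iff
    (isUpperSet_extendSet f hA) (isUpperSet_extendSet f hB)
    (colonSet_extendSet_self f (by simp [hx])) (colonSet_extendSet_self f (by simp [hx]))
    ⟨_, (map_mem_extendSet f).2 hF⟩ (colonSet_extendSet_subset f hx hAB hcolon)
  rw [← le_polyDepth_iff_gradeGE (sqIdeal_le_idealOfVars hmix₀),
    ← le_polyDepth_iff_gradeGE (sqIdeal_le_idealOfVars ((empty_mem_extendSet f).not.2 hA₀)),
    ← le_polyDepth_iff_gradeGE (sqIdeal_le_idealOfVars ((empty_mem_extendSet f).not.2 hB₀)),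
    polyDepth_extendSet f hx hA hA₀, polyDepth_extendSet f hx hB hB₀,
    Nat.add_le_add_iff_right] at key
  rw [key, le_min_iff]

lemma projDim_mixSet_extendSet (hx : Set.range f = {x}ᶜ) (hA : IsUpperSet A) (hB : IsUpperSet B)
    (hne : A.Nonempty) (hB₀ : ∅ ∉ B) (hAB : A ⊆ B) (hcolon : ∀ w, colonSet w A ⊆ B) :
    projDim (MvPolynomial σ K)
        (MvPolynomial σ K ⧸ sqIdeal K (mixSet x (extendSet f A) (extendSet f B))) =
      max (projDim (MvPolynomial τ K) (MvPolynomial τ K ⧸ sqIdeal K A) + 1)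
        (projDim (MvPolynomial τ K) (MvPolynomial τ K ⧸ sqIdeal K B)) := by
  classical
  have := Finite.of_injective f f.injective
  have hA₀ : ∅ ∉ A := fun h => hB₀ (hAB h)
  have hmix₀ : ∅ ∉ mixSet x (extendSet f A) (extendSet f B) := by
    simp [mixSet, empty_mem_extendSet, hA₀]
  have hmix := isUpperSet_mixSet (x := x) (isUpperSet_extendSet f hA) (isUpperSet_extendSet f hB)
    fun G hG => hAB hG
  obtain ⟨F, hF⟩ := hne
  refine eq_of_forall_gt_iff fun d => ?_
  cases d with
  | zero => simp
  | succ d =>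
    have key := (colonCompatible_hasProjectiveDimensionLT (K := K) (x := x) d fun _ hV hVx =>
      hasProjectiveDimensionLT_sqQuot_adjoinSet_iff f hx hV hVx).mixSet_iff
      (isUpperSet_extendSet f hA) (isUpperSet_extendSet f hB)
      (colonSet_extendSet_self f (by simp [hx])) (colonSet_extendSet_self f (by simp [hx]))
      ⟨_, (map_mem_extendSet f).2 hF⟩ (colonSet_extendSet_subset f hx hAB hcolon)
    rw [hasProjectiveDimensionLT_sqQuot_extendSet_iff f hA,
      hasProjectiveDimensionLT_sqQuot_extendSet_iff f hB, ← projDim_sqIdeal_lt_iff hmix hmix₀,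
      ← projDim_sqIdeal_lt_iff hA hA₀, ← projDim_sqIdeal_lt_iff hB hB₀] at key
    rw [key, max_lt_iff, Nat.add_lt_add_iff_right]

end MixedIdeals

section SquarefreePowers

variable {K : Type} [Field K] {σ : Type} {I : Ideal (MvPolynomial σ K)} {k l : ℕ}

/-- The supports of the squarefree monomials in `I ^ k`. -/
def powSet (I : Ideal (MvPolynomial σ K)) (k : ℕ) : Set (Finset σ) :=
  {F | sqMon K F ∈ I ^ k}

lemma sqfreePower_eq_sqIdeal (I : Ideal (MvPolynomial σ K)) (k : ℕ) :
    sqfreePower K I k = sqIdeal K (powSet I k) := by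
  refine congrArg Ideal.span (Set.ext fun m => ⟨?_, ?_⟩)
  · rintro ⟨F, rfl, h⟩
    exact ⟨F, h, rfl⟩
  · rintro ⟨F, h, rfl⟩
    exact ⟨F, rfl, h⟩

lemma isUpperSet_powSet (I : Ideal (MvPolynomial σ K)) (k : ℕ) : IsUpperSet (powSet I k) :=
  fun _ _ hFG hF => Ideal.mem_of_dvd _ (Finset.prod_dvd_prod_of_subset _ _ _ hFG) hF

lemma powSet_anti (I : Ideal (MvPolynomial σ K)) (h : k ≤ l) : powSet I l ⊆ powSet I k :=
  fun _ hF => Ideal.pow_le_pow_right h hF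

lemma empty_notMem_powSet (hI : I ≠ ⊤) (hk : k ≠ 0) : ∅ ∉ powSet I k := by
  have h : I ^ k ≠ ⊤ := by simp [Ideal.pow_eq_top_iff, hI, hk]
  simpa [powSet, sqMon, Ideal.eq_top_iff_one] using h

lemma pderiv_mem_pow (v : σ) {p : MvPolynomial σ K} (hp : p ∈ I ^ (k + 1)) :
    pderiv v p ∈ I ^ k := by
  induction k generalizing p with
  | zero => simp
  | succ k ih =>
    rw [pow_succ] at hp
    refine Submodule.mul_induction_on hp (fun a ha b hb => ?_) fun a b ha hb => ?_
    · rw [Derivation.leibniz, smul_eq_mul, smul_eq_mul]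
      refine add_mem (Ideal.mul_mem_right _ _ ha) ?_
      rw [pow_succ']
      exact Ideal.mul_mem_mul hb (ih ha)
    · rw [map_add]
      exact add_mem ha hb

lemma sqfreePower_ne_bot_iff : sqfreePower K I k ≠ ⊥ ↔ (powSet I k).Nonempty := by
  have hsq (F : Finset σ) : sqMon K F ≠ 0 := Finset.prod_ne_zero_iff.2 fun i _ => X_ne_zero i
  simp [sqfreePower_eq_sqIdeal, sqIdeal, Set.Nonempty, hsq]

lemma bddAbove_of_monGrade_ne_zero (h : monGrade K I ≠ 0) :
    BddAbove {k | sqfreePower K I k ≠ ⊥} :=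
  not_not.1 fun hb => h (Nat.sSup_of_not_bddAbove hb)

lemma ne_top_of_monGrade_ne_zero (h : monGrade K I ≠ 0) : I ≠ ⊤ := by
  rintro rfl
  obtain ⟨N, hN⟩ := bddAbove_of_monGrade_ne_zero h
  have hne : (powSet (⊤ : Ideal (MvPolynomial σ K)) (N + 1)).Nonempty :=
    ⟨∅, by simp [powSet, Ideal.top_pow]⟩
  exact absurd (hN (sqfreePower_ne_bot_iff.2 hne)) (by simp)

lemma powSet_nonempty_of_le_monGrade (h : monGrade K I ≠ 0) (hk : k ≤ monGrade K I) :
    (powSet I k).Nonempty := by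
  have hs : {k | sqfreePower K I k ≠ ⊥}.Nonempty := by
    refine Set.nonempty_iff_ne_empty.2 fun hs => h ?_
    rw [monGrade, hs, csSup_empty, bot_eq_zero]
  have hmem : sqfreePower K I (monGrade K I) ≠ ⊥ := Nat.sSup_mem hs (bddAbove_of_monGrade_ne_zero h)
  exact (sqfreePower_ne_bot_iff.1 hmem).mono (powSet_anti I hk)

variable [DecidableEq σ] {F : Finset σ} {v : σ}

lemma sqMon_eq_mul_erase (hv : v ∈ F) : sqMon K F = X v * sqMon K (F.erase v) :=
  (Finset.mul_prod_erase F _ hv).symm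

lemma pderiv_sqMon (hv : v ∈ F) : pderiv v (sqMon K F) = sqMon K (F.erase v) := by
  have h : pderiv v (sqMon K (F.erase v)) = 0 := by
    simp [sqMon_eq_monomial, pderiv_monomial, sum_single_one_apply]
  simp [sqMon_eq_mul_erase hv, h]

lemma erase_mem_powSet (hv : v ∈ F) (hF : F ∈ powSet I (k + 1)) : F.erase v ∈ powSet I k := by
  have := pderiv_mem_pow v hF
  rwa [pderiv_sqMon hv] at this

lemma colonSet_powSet_subset (I : Ideal (MvPolynomial σ K)) (k : ℕ) (v : σ) :
    colonSet v (powSet I (k + 1)) ⊆ powSet I k := fun G hG =>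
  isUpperSet_powSet I k (Finset.erase_insert_subset v G)
    (erase_mem_powSet (Finset.mem_insert_self v G) hG)

lemma mem_powSet_succ_iff_erase (hvI : X v ∈ I) (hv : v ∈ F) :
    F ∈ powSet I (k + 1) ↔ F.erase v ∈ powSet I k := by
  refine ⟨erase_mem_powSet hv, fun h => ?_⟩
  rw [powSet, Set.mem_ofPred_eq, sqMon_eq_mul_erase hv, pow_succ']
  exact Ideal.mul_mem_mul hvI h

end SquarefreePowers

section SquarefreePowersAdjoin

variable {K : Type} [Field K] {τ σ : Type} (f : τ ↪ σ) {x : σ}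

lemma mem_powSet_map_rename_sup_span_X (hx : Set.range f = {x}ᶜ) (I : Ideal (MvPolynomial τ K))
    {k : ℕ} {G : Finset σ} (hG : x ∉ G) :
    G ∈ powSet (I.map (rename f) ⊔ Ideal.span {X x}) k ↔ G ∈ extendSet f (powSet I k) := by
  classical
  have hsq : rename f (sqMon K (G.preimage f f.injective.injOn)) = sqMon K G := by
    rw [rename_sqMon, map_preimage_of_range_eq f hx, Finset.erase_eq_of_notMem hG]
  rw [extendSet, Set.mem_ofPred_eq, powSet, powSet, Set.mem_ofPred_eq, Set.mem_ofPred_eq, ← hsq]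
  constructor
  · intro h
    have hmap := Ideal.mem_map_of_mem (killCompl f.injective) h
    rw [← comap_killCompl f hx, Ideal.map_pow, killCompl_rename_app] at hmap
    exact Ideal.pow_right_mono Ideal.map_comap_le k hmap
  · intro h
    refine Ideal.pow_right_mono le_sup_left k ?_
    rw [← Ideal.map_pow]
    exact Ideal.mem_map_of_mem _ h

lemma powSet_map_rename_sup_span_X (hx : Set.range f = {x}ᶜ) (I : Ideal (MvPolynomial τ K))
    (k : ℕ) : powSet (I.map (rename f) ⊔ Ideal.span {X x}) (k + 1) =
      mixSet x (extendSet f (powSet I (k + 1))) (extendSet f (powSet I k)) := by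
  classical
  have hX : X x ∈ I.map (rename f) ⊔ Ideal.span {X x} :=
    Ideal.mem_sup_right (Ideal.mem_span_singleton_self _)
  ext G
  by_cases hG : x ∈ G
  · rw [mem_powSet_succ_iff_erase hX hG,
      mem_powSet_map_rename_sup_span_X f hx I (Finset.notMem_erase x G)]
    have hcolon := colonSet_extendSet_self (U := powSet I k) f (x := x) (by simp [hx])
    rw [← hcolon]
    simp [mixSet, colonSet, hG]
  · rw [mem_powSet_map_rename_sup_span_X f hx I hG]
    simp [mixSet, hG]

end SquarefreePowersAdjoin

theorem pd_depth_of_adjoin_variable_general {K : Type} [Field K] {τ σ : Type} [Finite σ]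
    (f : τ ↪ σ) {x : σ} (hx : Set.range f = {x}ᶜ)
    (I : Ideal (MvPolynomial τ K)) {k : ℕ} (hk : 2 ≤ k) (hkI : k ≤ monGrade K I) :
    projDim (MvPolynomial σ K)
        (MvPolynomial σ K ⧸ sqfreePower K (I.map (rename f) ⊔ Ideal.span {X x}) k) =
      max (projDim (MvPolynomial τ K) (MvPolynomial τ K ⧸ sqfreePower K I k) + 1)
        (projDim (MvPolynomial τ K) (MvPolynomial τ K ⧸ sqfreePower K I (k - 1))) ∧
    polyDepth K (sqfreePower K (I.map (rename f) ⊔ Ideal.span {X x}) k) =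
      min (polyDepth K (sqfreePower K I k)) (polyDepth K (sqfreePower K I (k - 1)) + 1) := by
  classical
  obtain ⟨k, rfl⟩ : ∃ l, k = l + 1 := Nat.exists_eq_add_of_le' (by omega)
  have hI : monGrade K I ≠ 0 := by omega
  have hA := isUpperSet_powSet I (k + 1)
  have hB := isUpperSet_powSet I k
  have hne := powSet_nonempty_of_le_monGrade hI hkI
  have hB₀ := empty_notMem_powSet (ne_top_of_monGrade_ne_zero hI) (show k ≠ 0 by omega)
  have hAB := powSet_anti I k.le_succ
  have hcolon := colonSet_powSet_subset I k
  rw [sqfreePower_eq_sqIdeal, sqfreePower_eq_sqIdeal, sqfreePower_eq_sqIdeal, Nat.add_sub_cancel,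
    powSet_map_rename_sup_span_X f hx]
  exact ⟨projDim_mixSet_extendSet f hx hA hB hne hB₀ hAB hcolon,
    polyDepth_mixSet_extendSet f hx hA hB hne hB₀ hAB hcolon⟩

/-- For a squarefree monomial ideal `I ⊆ S' = K[x₁,…,xₙ]` all of whose squarefree powers
are componentwise linear, and `J = (I, x) ⊆ S = S'[x]`, for every `2 ≤ k ≤ ν(I)`:
`pd(S/J^[k]) = max{ pd(S'/I^[k]) + 1, pd(S'/I^[k−1]) }`, and equivalently
`depth(S/J^[k]) = min{ depth(S'/I^[k]), depth(S'/I^[k−1]) + 1 }`. -/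
theorem pd_depth_of_adjoin_variable (K : Type) [Field K] (n : ℕ)
    (I : Ideal (MvPolynomial (Fin n) K)) (hI : IsSqfreeMonomialIdeal K I)
    (hcl : ∀ k : ℕ, 1 ≤ k → k ≤ monGrade K I → ComponentwiseLinear K (sqfreePower K I k))
    (J : Ideal (MvPolynomial (Fin (n + 1)) K))
    (hJ : J = Ideal.map (MvPolynomial.rename (Fin.castSucc : Fin n → Fin (n + 1))) I ⊔
              Ideal.span {MvPolynomial.X (Fin.last n)}) :
    ∀ k : ℕ, 2 ≤ k → k ≤ monGrade K I →
      projDim (MvPolynomial (Fin (n + 1)) K)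
          (MvPolynomial (Fin (n + 1)) K ⧸ sqfreePower K J k) =
        max (projDim (MvPolynomial (Fin n) K)
              (MvPolynomial (Fin n) K ⧸ sqfreePower K I k) + 1)
          (projDim (MvPolynomial (Fin n) K)
            (MvPolynomial (Fin n) K ⧸ sqfreePower K I (k - 1))) ∧
      polyDepth K (sqfreePower K J k) =
        min (polyDepth K (sqfreePower K I k))
          (polyDepth K (sqfreePower K I (k - 1)) + 1) := by
  subst hJ
  have hrange : Set.range (Fin.castSuccEmb : Fin n ↪ Fin (n + 1)) = {Fin.last n}ᶜ := by
    simpa using Fin.range_succAbove (Fin.last n)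
  exact fun k hk hkI => pd_depth_of_adjoin_variable_general Fin.castSuccEmb hrange I hk hkI
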